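/- arXiv:2401.03380 — 5 statements merged into one kernel-verified Lean document; each statement's English description precedes it below -/
import Mathlib

section
/- The alternating Mordell–Tornheim value T(\bar1,\bar1;1) = ∑_{m1,m2≥1} (-1)^{m1+m2}/(m1·m2·(m1+m2)) equals (1/4)ζ(3). -/
open Finset Filter

/-- The summand `1 / (m n (m + n))` at `m = p.1 + 1`, `n = p.2 + 1`. -/
noncomputable def tornheimTerm (p : ℕ × ℕ) : ℝ :=
  1 / (((p.1 : ℝ) + 1) * ((p.2 : ℝ) + 1) * ((p.1 : ℝ) + p.2 + 2))

lemma tornheimTerm_nonneg (p : ℕ × ℕ) : 0 ≤ tornheimTerm p := by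
  unfold tornheimTerm; positivity

lemma summable_tornheimTerm : Summable tornheimTerm := by
  have h : Summable (fun n : ℕ => (((n + 1 : ℕ) : ℝ) ^ (3 / 2 : ℝ))⁻¹) :=
    (summable_nat_add_iff 1).mpr (Real.summable_nat_rpow_inv.mpr (by norm_num))
  refine Summable.of_nonneg_of_le tornheimTerm_nonneg (fun p => ?_)
    (h.mul_of_nonneg h (fun _ => by positivity) (fun _ => by positivity))
  rw [← mul_inv, tornheimTerm, one_div]
  have key : ∀ x y : ℝ, 0 < x → 0 < y →
      x ^ (3 / 2 : ℝ) * y ^ (3 / 2 : ℝ) ≤ x * y * (x + y) := by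
    intro x y hx hy
    have e : ∀ z : ℝ, 0 < z → z ^ (3 / 2 : ℝ) = z * √z := by
      intro z hz
      rw [Real.sqrt_eq_rpow, ← Real.rpow_one_add' hz.le (by norm_num)]
      norm_num
    rw [e x hx, e y hy]
    have h1 : √x * √y ≤ x + y := by
      nlinarith [Real.sq_sqrt hx.le, Real.sq_sqrt hy.le, sq_nonneg (√x - √y)]
    calc x * √x * (y * √y) = x * y * (√x * √y) := by ring
      _ ≤ x * y * (x + y) := by gcongr
  refine inv_anti₀ (by positivity) ?_
  have := key ((p.1 : ℝ) + 1) ((p.2 : ℝ) + 1) (by positivity) (by positivity)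
  push_cast
  refine this.trans (le_of_eq (by ring))

lemma summable_mul_tornheimTerm {c : ℕ × ℕ → ℝ} (hc : ∀ p, |c p| ≤ 1) :
    Summable (fun p => c p * tornheimTerm p) := by
  refine Summable.of_norm_bounded summable_tornheimTerm (fun p => ?_)
  rw [Real.norm_eq_abs, abs_mul, abs_of_nonneg (tornheimTerm_nonneg p)]
  exact mul_le_of_le_one_left (tornheimTerm_nonneg p) (hc p)

/-- The `n`-th harmonic number as a real number. -/
noncomputable def realHarmonic (n : ℕ) : ℝ := ∑ i ∈ range n, 1 / ((i : ℝ) + 1)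

lemma hasSum_one_div_sub_one_div_succ (m : ℕ) :
    HasSum (fun n : ℕ => 1 / ((n : ℝ) + m + 1) - 1 / ((n : ℝ) + (m + 1 : ℕ) + 1))
      (1 / ((m : ℝ) + 1)) := by
  rw [hasSum_iff_tendsto_nat_of_nonneg]
  · have e : ∀ N : ℕ, ∑ n ∈ range N,
        (1 / ((n : ℝ) + m + 1) - 1 / ((n : ℝ) + (m + 1 : ℕ) + 1))
          = 1 / ((m : ℝ) + 1) - 1 / (((N + m : ℕ) : ℝ) + 1) := by
      intro N
      have := sum_range_sub' (fun n : ℕ => 1 / ((n : ℝ) + m + 1)) N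
      simp only [Nat.cast_zero, zero_add] at this
      rw [Nat.cast_add N m, ← this]
      refine sum_congr rfl fun n _ => ?_
      push_cast
      ring
    simp_rw [e]
    have h := (tendsto_add_atTop_iff_nat m).mpr
      (tendsto_one_div_add_atTop_nhds_zero_nat (𝕜 := ℝ))
    simpa using h.const_sub (1 / ((m : ℝ) + 1))
  · intro n
    rw [sub_nonneg]
    gcongr
    simp

lemma hasSum_one_div_sub_one_div_add (m : ℕ) :
    HasSum (fun n : ℕ => 1 / ((n : ℝ) + 1) - 1 / ((n : ℝ) + m + 1)) (realHarmonic m) := by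
  induction m with
  | zero => simp [realHarmonic, hasSum_zero]
  | succ m ih =>
    rw [realHarmonic, sum_range_succ]
    refine (ih.add (hasSum_one_div_sub_one_div_succ m)).congr_fun fun n => ?_
    ring

lemma hasSum_tornheimTerm_right (a : ℕ) :
    HasSum (fun b : ℕ => tornheimTerm (a, b))
      (realHarmonic (a + 1) / ((a : ℝ) + 1) ^ 2) := by
  refine ((hasSum_one_div_sub_one_div_add (a + 1)).div_const _).congr_fun fun b => ?_
  unfold tornheimTerm
  push_cast
  have : (b : ℝ) + (a + 1) + 1 ≠ 0 := by positivity
  have : (a : ℝ) + b + 2 ≠ 0 := by positivity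
  field_simp
  ring

lemma sum_antidiagonal_tornheimTerm (k : ℕ) :
    ∑ p ∈ HasAntidiagonal.antidiagonal k, tornheimTerm p
      = 2 * (realHarmonic (k + 1) / ((k : ℝ) + 2) ^ 2) := by
  have e : ∀ p ∈ HasAntidiagonal.antidiagonal k, tornheimTerm p
      = (1 / ((p.1 : ℝ) + 1) + 1 / ((p.2 : ℝ) + 1)) / ((k : ℝ) + 2) ^ 2 := by
    intro p hp
    rw [HasAntidiagonal.mem_antidiagonal] at hp
    subst hp
    unfold tornheimTerm
    push_cast
    field_simp
    ring
  have h1 : ∑ p ∈ HasAntidiagonal.antidiagonal k, 1 / ((p.1 : ℝ) + 1) = realHarmonic (k + 1) :=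
    Nat.sum_antidiagonal_eq_sum_range_succ (fun i _ => 1 / ((i : ℝ) + 1)) k
  have h2 : ∑ p ∈ HasAntidiagonal.antidiagonal k, 1 / ((p.2 : ℝ) + 1) = realHarmonic (k + 1) := by
    rw [← h1, ← Nat.sum_antidiagonal_swap]
    rfl
  rw [sum_congr rfl e, ← sum_div, sum_add_distrib, h1, h2]
  ring

lemma tsum_fst_weight_eq {ε : ℕ → ℝ} (hε : ∀ n, |ε n| ≤ 1) :
    ∑' p : ℕ × ℕ, ε (p.1 + 1) * tornheimTerm p
      = 1 / 2 * ∑' p : ℕ × ℕ, ε (p.1 + p.2 + 2) * tornheimTerm p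
        + ∑' n : ℕ, ε (n + 1) / ((n : ℝ) + 1) ^ 3 := by
  have hG := (summable_mul_tornheimTerm (c := fun p => ε (p.1 + 1))
    fun p => hε _).hasSum.prod_fiberwise
    fun a => (hasSum_tornheimTerm_right a).mul_left (ε (a + 1))
  have hF := ((HasAntidiagonal.sigmaAntidiagonalEquivProd (A := ℕ)).hasSum_iff.mpr
    (summable_mul_tornheimTerm (c := fun p => ε (p.1 + p.2 + 2))
      fun p => hε _).hasSum).sigma fun k => hasSum_fintype _
  have hF' : HasSum (fun k : ℕ => ε (k + 2) * (realHarmonic (k + 1) / ((k : ℝ) + 2) ^ 2))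
      (1 / 2 * ∑' p : ℕ × ℕ, ε (p.1 + p.2 + 2) * tornheimTerm p) := by
    refine (hF.mul_left (1 / 2)).congr_fun fun k => ?_
    have : ∑ c : HasAntidiagonal.antidiagonal k,
        ((fun p : ℕ × ℕ => ε (p.1 + p.2 + 2) * tornheimTerm p) ∘
          HasAntidiagonal.sigmaAntidiagonalEquivProd) ⟨k, c⟩
        = ε (k + 2) * (2 * (realHarmonic (k + 1) / ((k : ℝ) + 2) ^ 2)) := by
      rw [← sum_antidiagonal_tornheimTerm, mul_sum, ← sum_coe_sort (HasAntidiagonal.antidiagonal k)]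
      refine sum_congr rfl fun c _ => ?_
      have hc := HasAntidiagonal.mem_antidiagonal.mp c.2
      simp only [Function.comp, HasAntidiagonal.sigmaAntidiagonalEquivProd_apply, hc]
    rw [this]
    ring
  have hshift : HasSum (fun k : ℕ => ε (k + 1) * (realHarmonic k / ((k : ℝ) + 1) ^ 2))
      (1 / 2 * ∑' p : ℕ × ℕ, ε (p.1 + p.2 + 2) * tornheimTerm p) := by
    rw [← hasSum_nat_add_iff' 1]
    simp only [range_one, sum_singleton]
    have h0 : realHarmonic 0 = 0 := by simp [realHarmonic]
    rw [h0]
    simp only [zero_div, mul_zero, sub_zero]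
    refine hF'.congr_fun fun k => ?_
    push_cast
    ring
  have hd := (hG.sub hshift).congr_fun (g := fun n : ℕ => ε (n + 1) / ((n : ℝ) + 1) ^ 3)
    fun n => by
      rw [realHarmonic, realHarmonic, sum_range_succ]
      field_simp
      ring
  rw [hd.tsum_eq]
  ring

lemma neg_one_pow_succ_eq_neg_one {n : ℕ} (h : n ∉ Set.range (fun j : ℕ => 2 * j + 1)) :
    (-1 : ℝ) ^ (n + 1) = -1 := by
  refine Odd.neg_one_pow ?_
  rw [Nat.odd_add_one]
  rintro ⟨j, hj⟩
  exact h ⟨j, hj.symm⟩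

lemma tsum_one_add_neg_one_pow_cube :
    ∑' n : ℕ, (1 + (-1 : ℝ) ^ (n + 1)) / ((n : ℝ) + 1) ^ 3
      = 1 / 4 * ∑' n : ℕ, 1 / ((n : ℝ) + 1) ^ 3 := by
  have hinj : Function.Injective (fun j : ℕ => 2 * j + 1) := fun a b h => by simpa using h
  rw [← hinj.tsum_eq, ← tsum_mul_left]
  · refine tsum_congr fun n => ?_
    have : (-1 : ℝ) ^ (2 * n + 1 + 1) = 1 := Even.neg_one_pow ⟨n + 1, by ring⟩
    rw [this]
    push_cast
    field_simp
    ring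
  · intro n hn
    by_contra h
    exact hn (by simp [neg_one_pow_succ_eq_neg_one h])

lemma tsum_one_add_neg_one_pow_tornheimTerm :
    ∑' p : ℕ × ℕ, (1 + (-1 : ℝ) ^ (p.1 + 1)) * (1 + (-1 : ℝ) ^ (p.2 + 1)) * tornheimTerm p
      = 1 / 2 * ∑' p : ℕ × ℕ, tornheimTerm p := by
  have hinj : Function.Injective (fun j : ℕ => 2 * j + 1) := fun a b h => by simpa using h
  rw [← (hinj.prodMap hinj).tsum_eq, ← tsum_mul_left]
  · refine tsum_congr fun p => ?_
    have : ∀ n : ℕ, (-1 : ℝ) ^ (2 * n + 1 + 1) = 1 :=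
      fun n => Even.neg_one_pow ⟨n + 1, by ring⟩
    simp only [Prod.map, this, tornheimTerm]
    push_cast
    field_simp
    ring
  · intro p hp
    rw [Set.range_prodMap]
    constructor
    · by_contra h
      exact hp (by simp [neg_one_pow_succ_eq_neg_one h])
    · by_contra h
      exact hp (by simp [neg_one_pow_succ_eq_neg_one h])

lemma abs_neg_one_pow_le_one (n : ℕ) : |(-1 : ℝ) ^ n| ≤ 1 := by simp

lemma summable_one_div_succ_cube : Summable (fun n : ℕ => 1 / ((n : ℝ) + 1) ^ 3) := by
  have := (summable_nat_add_iff 1).mpr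
    (Real.summable_one_div_nat_pow.mpr (by norm_num : 1 < 3))
  exact_mod_cast this

lemma tsum_alternating_tornheimTerm :
    ∑' p : ℕ × ℕ, (-1 : ℝ) ^ (p.1 + p.2 + 2) * tornheimTerm p
      = 1 / 4 * ∑' n : ℕ, 1 / ((n : ℝ) + 1) ^ 3 := by
  have hA := tsum_fst_weight_eq (ε := fun _ => 1) (by simp)
  have hB := tsum_fst_weight_eq (ε := fun n => (-1) ^ n) abs_neg_one_pow_le_one
  simp only [one_mul] at hA
  have hsB := summable_mul_tornheimTerm (c := fun p => (-1) ^ (p.1 + p.2 + 2))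
    fun p => abs_neg_one_pow_le_one _
  have hsC := summable_mul_tornheimTerm (c := fun p => (-1) ^ (p.1 + 1))
    fun p => abs_neg_one_pow_le_one _
  have hsC' := summable_mul_tornheimTerm (c := fun p => (-1) ^ (p.2 + 1))
    fun p => abs_neg_one_pow_le_one _
  have hswap : ∑' p : ℕ × ℕ, (-1 : ℝ) ^ (p.2 + 1) * tornheimTerm p
      = ∑' p : ℕ × ℕ, (-1 : ℝ) ^ (p.1 + 1) * tornheimTerm p := by
    rw [← (Equiv.prodComm ℕ ℕ).tsum_eq]
    refine tsum_congr fun p => ?_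
    simp only [Equiv.prodComm_apply, Prod.fst_swap, Prod.snd_swap, tornheimTerm]
    ring
  have hpar := tsum_one_add_neg_one_pow_tornheimTerm
  have hexp : ∀ p : ℕ × ℕ,
      (1 + (-1 : ℝ) ^ (p.1 + 1)) * (1 + (-1 : ℝ) ^ (p.2 + 1)) * tornheimTerm p
      = (tornheimTerm p + (-1 : ℝ) ^ (p.1 + p.2 + 2) * tornheimTerm p)
        + ((-1 : ℝ) ^ (p.1 + 1) * tornheimTerm p + (-1 : ℝ) ^ (p.2 + 1) * tornheimTerm p) :=
    fun p => by ring
  rw [tsum_congr hexp, (summable_tornheimTerm.add hsB).tsum_add (hsC.add hsC'),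
    summable_tornheimTerm.tsum_add hsB, hsC.tsum_add hsC', hswap] at hpar
  have hcube := tsum_one_add_neg_one_pow_cube
  have hsalt : Summable (fun n : ℕ => (-1 : ℝ) ^ (n + 1) / ((n : ℝ) + 1) ^ 3) := by
    refine Summable.of_norm_bounded summable_one_div_succ_cube fun n => ?_
    simp [abs_of_nonneg (by positivity : (0 : ℝ) ≤ (n : ℝ) + 1)]
  simp_rw [add_div] at hcube
  rw [summable_one_div_succ_cube.tsum_add hsalt] at hcube
  linarith

/-- The alternating Mordell–Tornheim value
`T(1̄,1̄;1) = ∑_{m1,m2 ≥ 1} (-1)^{m1+m2}/(m1 m2 (m1+m2))` (as an iterated sum)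
equals `(1/4) ζ(3)`. -/
theorem stmt_2 :
    (∑' m1 : ℕ+, ∑' m2 : ℕ+,
        (-1 : ℝ) ^ ((m1 : ℕ) + (m2 : ℕ)) / ((m1 : ℝ) * (m2 : ℝ) * ((m1 : ℝ) + (m2 : ℝ))))
      = (1 / 4) * ∑' n : ℕ+, 1 / (n : ℝ) ^ 3 := by
  have hs := summable_mul_tornheimTerm (c := fun p => (-1) ^ (p.1 + p.2 + 2))
    fun p => abs_neg_one_pow_le_one _
  have h := tsum_alternating_tornheimTerm
  rw [hs.tsum_prod] at h
  rw [tsum_pnat_eq_tsum_succ (f := fun n : ℕ => 1 / (n : ℝ) ^ 3)]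
  push_cast
  rw [← h, ← Equiv.pnatEquivNat.symm.tsum_eq]
  refine tsum_congr fun a => ?_
  rw [← Equiv.pnatEquivNat.symm.tsum_eq]
  refine tsum_congr fun b => ?_
  simp only [Equiv.pnatEquivNat_symm_apply, Nat.succPNat_coe, Nat.succ_eq_add_one, tornheimTerm]
  push_cast
  rw [mul_one_div]
  congr 1 <;> ring
end

section
/- For every prime p ≥ 5, the sum ∑_{i+j+k=p, i,j,k>0} 1/(ijk) is congruent to -2·B_{p-3} modulo p, where the sum of unit fractions is interpreted in ℤ/pℤ (all denominators i,j,k are coprime to p since 0 < i,j,k < p) and B_{p-3} is the (p-3)rd Bernoulli number, whose denominator is coprime to p by the von Staudt–Clausen theorem. -/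
/-- The rational `q` has denominator prime to `p`, and its reduction modulo `p` is `z`. -/
def ReducesTo (p : ℕ) [Fact p.Prime] (q : ℚ) (z : ZMod p) : Prop :=
  (q.den : ZMod p) ≠ 0 ∧ (q : ZMod p) = z

namespace ReducesTo

variable {p : ℕ} [Fact p.Prime] {q r : ℚ} {z w : ZMod p}

theorem natCast (n : ℕ) : ReducesTo p (n : ℚ) n := by
  simp [ReducesTo]

theorem add (hq : ReducesTo p q z) (hr : ReducesTo p r w) : ReducesTo p (q + r) (z + w) := by
  refine ⟨fun h => mul_ne_zero hq.1 hr.1 ?_, ?_⟩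
  · rw [ZMod.natCast_eq_zero_iff] at h
    exact_mod_cast (ZMod.natCast_eq_zero_iff _ _).2 (h.trans (Rat.add_den_dvd q r))
  · rw [Rat.cast_add_of_ne_zero hq.1 hr.1, hq.2, hr.2]

theorem mul (hq : ReducesTo p q z) (hr : ReducesTo p r w) : ReducesTo p (q * r) (z * w) := by
  refine ⟨fun h => mul_ne_zero hq.1 hr.1 ?_, ?_⟩
  · rw [ZMod.natCast_eq_zero_iff] at h
    exact_mod_cast (ZMod.natCast_eq_zero_iff _ _).2 (h.trans (Rat.mul_den_dvd q r))
  · rw [Rat.cast_mul_of_ne_zero hq.1 hr.1, hq.2, hr.2]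

theorem neg (hq : ReducesTo p q z) : ReducesTo p (-q) (-z) :=
  ⟨by simpa using hq.1, by rw [Rat.cast_neg, hq.2]⟩

theorem sub (hq : ReducesTo p q z) (hr : ReducesTo p r w) : ReducesTo p (q - r) (z - w) := by
  simpa only [sub_eq_add_neg] using hq.add hr.neg

theorem pow (hq : ReducesTo p q z) (n : ℕ) : ReducesTo p (q ^ n) (z ^ n) := by
  induction n with
  | zero => simpa only [pow_zero, Nat.cast_one] using natCast (p := p) 1
  | succ n ih => simpa only [pow_succ] using ih.mul hq

theorem inv_natCast {n : ℕ} (hn : (n : ZMod p) ≠ 0) :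
    ReducesTo p (n : ℚ)⁻¹ (n : ZMod p)⁻¹ := by
  have hn' : n ≠ 0 := by rintro rfl; simp at hn
  refine ⟨?_, ?_⟩
  · simpa [Rat.inv_natCast_den, hn'] using hn
  · rw [Rat.cast_inv_of_ne_zero] <;> simp [hn]

theorem sum {ι : Type*} {s : Finset ι} {f : ι → ℚ} {g : ι → ZMod p}
    (h : ∀ i ∈ s, ReducesTo p (f i) (g i)) : ReducesTo p (∑ i ∈ s, f i) (∑ i ∈ s, g i) := by
  classical
  induction s using Finset.induction_on with
  | empty => simpa using natCast (p := p) 0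
  | insert a s ha ih =>
    rw [Finset.sum_insert ha, Finset.sum_insert ha]
    exact (h a (by simp)).add (ih fun i hi => h i (by simp [hi]))

end ReducesTo

section

variable {p : ℕ} [Fact p.Prime]

theorem ZMod.natCast_ne_zero_of_pos_of_lt {n : ℕ} (h0 : 0 < n) (hn : n < p) :
    (n : ZMod p) ≠ 0 := by
  rw [Ne, ZMod.natCast_eq_zero_iff]
  exact Nat.not_dvd_of_pos_of_lt h0 hn

theorem reducesTo_bernoulli {m : ℕ} (hm : m + 1 < p) :
    ReducesTo p (bernoulli m) (bernoulli m : ZMod p) := by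
  suffices h : ReducesTo p (bernoulli' m) (bernoulli' m : ZMod p) by
    have h1 : ReducesTo p ((-1 : ℚ) ^ m) ((-1) ^ m) := by
      simpa using (ReducesTo.natCast (p := p) 1).neg.pow m
    exact ⟨(h1.mul h).1, rfl⟩
  induction m using Nat.strong_induction_on with
  | _ m ih =>
    rw [bernoulli'_def]
    have hsum : ReducesTo p
        (∑ k ∈ Finset.range m, (m.choose k : ℚ) / (m - k + 1) * bernoulli' k)
        (∑ k ∈ Finset.range m,
          (m.choose k : ZMod p) * ((m - k + 1 : ℕ) : ZMod p)⁻¹ * (bernoulli' k : ZMod p)) := by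
      refine ReducesTo.sum fun k hk => ?_
      have hk' := Finset.mem_range.1 hk
      have hc : (m : ℚ) - k + 1 = ((m - k + 1 : ℕ) : ℚ) := by
        push_cast [Nat.cast_sub hk'.le]; ring
      rw [div_eq_mul_inv, hc]
      exact ((ReducesTo.natCast _).mul (ReducesTo.inv_natCast
        (ZMod.natCast_ne_zero_of_pos_of_lt (by omega) (by omega)))).mul (ih k hk' (by omega))
    have h1 := (ReducesTo.natCast (p := p) 1).sub hsum
    rw [Nat.cast_one] at h1
    exact ⟨h1.1, rfl⟩

/-- **Faulhaber's formula** modulo `p`, for exponents below `p - 1`. -/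
theorem ZMod.sum_range_pow_eq_bernoulli (n : ℕ) {m : ℕ} (hm : m + 1 < p) :
    ∑ k ∈ Finset.range n, (k : ZMod p) ^ m =
      ∑ i ∈ Finset.range (m + 1), (bernoulli i : ZMod p) * ((m + 1).choose i) *
        (n : ZMod p) ^ (m + 1 - i) * ((m + 1 : ℕ) : ZMod p)⁻¹ := by
  have h1 : ReducesTo p (∑ k ∈ Finset.range n, (k : ℚ) ^ m)
      (∑ k ∈ Finset.range n, (k : ZMod p) ^ m) :=
    ReducesTo.sum fun k _ => (ReducesTo.natCast k).pow m
  rw [← h1.2, sum_range_pow]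
  refine (ReducesTo.sum fun i hi => ?_).2
  have hi' := Finset.mem_range.1 hi
  rw [div_eq_mul_inv, ← Nat.cast_succ]
  exact (((reducesTo_bernoulli (by omega)).mul (ReducesTo.natCast _)).mul
    ((ReducesTo.natCast n).pow _)).mul
    (ReducesTo.inv_natCast (ZMod.natCast_ne_zero_of_pos_of_lt (by omega) hm))

theorem ZMod.inv_eq_pow_sub_two (hp : 3 ≤ p) (a : ZMod p) : a⁻¹ = a ^ (p - 2) := by
  rcases eq_or_ne a 0 with rfl | ha
  · simp [show p - 2 ≠ 0 by omega]
  · refine inv_eq_of_mul_eq_one_right ?_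
    rw [← pow_succ', show p - 2 + 1 = p - 1 by omega, ZMod.pow_card_sub_one_eq_one ha]

theorem ZMod.sum_range_natCast_eq_sum_univ (f : ZMod p → ZMod p) :
    ∑ n ∈ Finset.range p, f n = ∑ a : ZMod p, f a :=
  Finset.sum_bij' (fun n _ => (n : ZMod p)) (fun a _ => a.val) (by simp)
    (fun a _ => by simpa using ZMod.val_lt a)
    (fun n hn => ZMod.val_cast_of_lt (Finset.mem_range.1 hn))
    (by simp) (by simp)

theorem ZMod.sum_inv_sq_mul_pow (hp : 5 ≤ p) {i : ℕ} (hi : i < p - 1) :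
    ∑ n ∈ Finset.range p, ((n : ZMod p)⁻¹) ^ 2 * (n : ZMod p) ^ (p - 1 - i) =
      if i = p - 3 then -1 else 0 := by
  rw [ZMod.sum_range_natCast_eq_sum_univ fun a => a⁻¹ ^ 2 * a ^ (p - 1 - i)]
  have hcard : Fintype.card (ZMod p) = p := ZMod.card p
  split_ifs with h
  · have hterm (a : ZMod p) : a⁻¹ ^ 2 * a ^ (p - 1 - i) = 1 - if a = 0 then 1 else 0 := by
      rw [show p - 1 - i = 2 by omega]
      by_cases ha : a = 0
      · simp [ha]
      · simp [ha]
    rw [Finset.sum_congr rfl fun a _ => hterm a]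
    simp
  · obtain ⟨e, he, hterm⟩ : ∃ e < p - 1, ∀ a : ZMod p, a⁻¹ ^ 2 * a ^ (p - 1 - i) = a ^ e := by
      rcases Nat.lt_or_ge i (p - 3) with hlt | hge
      · refine ⟨p - 3 - i, by omega, fun a => ?_⟩
        rw [show p - 1 - i = p - 3 - i + 2 by omega]
        by_cases ha : a = 0
        · simp [ha, show p - 3 - i ≠ 0 by omega]
        · field_simp
          ring
      · refine ⟨p - 2, by omega, fun a => ?_⟩
        rw [← ZMod.inv_eq_pow_sub_two (by omega), show p - 1 - i = 1 by omega]
        by_cases ha : a = 0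
        · simp [ha]
        · field_simp
    simp_rw [hterm]
    exact FiniteField.sum_pow_lt_card_sub_one _ e (by rwa [hcard])

theorem ZMod.choose_prime_sub_one_sub_three (hp : 3 ≤ p) :
    ((p - 1).choose (p - 3) : ZMod p) = 1 := by
  have h2 : (2 : ZMod p) ≠ 0 := by
    exact_mod_cast ZMod.natCast_ne_zero_of_pos_of_lt (p := p) (n := 2) (by omega) (by omega)
  have hc : (p - 1).choose (p - 3) * 2 = (p - 1) * (p - 2) := by
    rw [← Nat.choose_symm (by omega), show p - 1 - (p - 3) = 2 by omega, Nat.choose_two_right,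
      show p - 1 - 1 = p - 2 by omega]
    exact Nat.div_mul_cancel (Nat.even_mul_pred_self (p - 1)).two_dvd
  have hc' := congrArg (Nat.cast : ℕ → ZMod p) hc
  push_cast [Nat.cast_sub (show 1 ≤ p by omega), Nat.cast_sub (show 2 ≤ p by omega)] at hc'
  refine mul_right_cancel₀ h2 (hc'.trans ?_)
  simp

/-- The multiple harmonic sum `∑_{j < n < p} 1 / (n² j)` is `B_{p-3}` modulo `p`. -/
theorem ZMod.sum_inv_sq_mul_sum_inv (hp : 5 ≤ p) :
    ∑ n ∈ Finset.range p, ((n : ZMod p)⁻¹) ^ 2 * ∑ j ∈ Finset.range n, (j : ZMod p)⁻¹ =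
      (bernoulli (p - 3) : ZMod p) := by
  simp_rw [ZMod.inv_eq_pow_sub_two (show 3 ≤ p by omega) ((_ : ℕ) : ZMod p),
    ZMod.sum_range_pow_eq_bernoulli (p := p) _ (show p - 2 + 1 < p by omega),
    ← ZMod.inv_eq_pow_sub_two (show 3 ≤ p by omega), Finset.mul_sum]
  rw [Finset.sum_comm, show p - 2 + 1 = p - 1 by omega]
  have hterm : ∀ i ∈ Finset.range (p - 1),
      ∑ n ∈ Finset.range p, ((n : ZMod p)⁻¹) ^ 2 * ((bernoulli i : ZMod p) *
        ((p - 1).choose i) * (n : ZMod p) ^ (p - 1 - i) * ((p - 1 : ℕ) : ZMod p)⁻¹) =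
      if i = p - 3 then
        (bernoulli i : ZMod p) * ((p - 1).choose i) * ((p - 1 : ℕ) : ZMod p)⁻¹ * -1 else 0 := by
    intro i hi
    rw [← mul_ite_zero, ← ZMod.sum_inv_sq_mul_pow hp (Finset.mem_range.1 hi), Finset.mul_sum]
    exact Finset.sum_congr rfl fun n _ => by ring
  rw [Finset.sum_congr rfl hterm, Finset.sum_ite_eq', if_pos (Finset.mem_range.2 (by omega)),
    ZMod.choose_prime_sub_one_sub_three (by omega), Nat.cast_sub (by omega)]
  simp [inv_neg]

theorem ZMod.inv_mul_mul_of_add_eq {i j k : ℕ} (hi : 0 < i) (hj : 0 < j) (hk : 0 < k)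
    (h : i + j + k = p) :
    ((i : ZMod p) * j * k)⁻¹ =
      -((((j + k : ℕ) : ZMod p)⁻¹) ^ 2 * ((j : ZMod p)⁻¹ + (k : ZMod p)⁻¹)) := by
  have hj0 : (j : ZMod p) ≠ 0 := ZMod.natCast_ne_zero_of_pos_of_lt hj (by omega)
  have hk0 : (k : ZMod p) ≠ 0 := ZMod.natCast_ne_zero_of_pos_of_lt hk (by omega)
  have hjk0 : ((j + k : ℕ) : ZMod p) ≠ 0 :=
    ZMod.natCast_ne_zero_of_pos_of_lt (by omega) (by omega)
  have hi' : (i : ZMod p) = -((j + k : ℕ) : ZMod p) := by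
    rw [eq_neg_iff_add_eq_zero, ← Nat.cast_add, ← add_assoc, h, ZMod.natCast_self]
  rw [hi']
  push_cast at hjk0 ⊢
  field_simp
  ring

end

theorem Finset.sum_Ico_one_sub {M : Type*} [AddCommMonoid M] (f : ℕ → M) (n : ℕ) :
    ∑ j ∈ Finset.Ico 1 n, f (n - j) = ∑ j ∈ Finset.Ico 1 n, f j :=
  Finset.sum_bij' (fun j _ => n - j) (fun j _ => n - j)
    (by simp; omega) (by simp; omega) (by simp; omega) (by simp; omega) (by simp)


/-- For every prime `p ≥ 5`,
`∑_{i+j+k=p, i,j,k>0} 1/(ijk) ≡ -2 B_{p-3} (mod p)`, interpreted in `ℤ/pℤ`. -/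
theorem stmt_6 (p : ℕ) [Fact p.Prime] (hp : 5 ≤ p) :
    (∑ x ∈ (Finset.range (p + 1) ×ˢ Finset.range (p + 1) ×ˢ
        Finset.range (p + 1)).filter
        (fun x : ℕ × ℕ × ℕ =>
          x.1 + x.2.1 + x.2.2 = p ∧ 0 < x.1 ∧ 0 < x.2.1 ∧ 0 < x.2.2),
        ((x.1 : ZMod p) * (x.2.1 : ZMod p) * (x.2.2 : ZMod p))⁻¹)
      = ((-2 * bernoulli (p - 3) : ℚ) : ZMod p) := by
  have hreindex : ∀ f : ℕ × ℕ × ℕ → ZMod p,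
      (∑ x ∈ (Finset.range (p + 1) ×ˢ Finset.range (p + 1) ×ˢ
        Finset.range (p + 1)).filter
        (fun x : ℕ × ℕ × ℕ =>
          x.1 + x.2.1 + x.2.2 = p ∧ 0 < x.1 ∧ 0 < x.2.1 ∧ 0 < x.2.2), f x) =
      ∑ n ∈ Finset.range p, ∑ j ∈ Finset.Ico 1 n, f (p - n, j, n - j) := by
    intro f
    rw [Finset.sum_sigma']
    refine Finset.sum_bij' (fun x _ => ⟨x.2.1 + x.2.2, x.2.1⟩)
      (fun y _ => (p - y.1, y.2, y.1 - y.2)) ?_ ?_ ?_ ?_ ?_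
    · rintro ⟨i, j, k⟩ h
      simp at h ⊢
      omega
    · rintro ⟨n, j⟩ h
      simp at h ⊢
      omega
    · rintro ⟨i, j, k⟩ h
      simp at h ⊢
      omega
    · rintro ⟨n, j⟩ h
      simp at h ⊢
      omega
    · rintro ⟨i, j, k⟩ h
      simp at h ⊢
      rw [show p - (j + k) = i by omega]
  have hbern : ((-2 * bernoulli (p - 3) : ℚ) : ZMod p) =
      -2 * (bernoulli (p - 3) : ZMod p) := by
    simpa using ((ReducesTo.natCast (p := p) 2).neg.mul (reducesTo_bernoulli (by omega))).2
  rw [hreindex, hbern, ← ZMod.sum_inv_sq_mul_sum_inv hp, Finset.mul_sum]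
  refine Finset.sum_congr rfl fun n hn => ?_
  have hn' := Finset.mem_range.1 hn
  have hrange : ∑ j ∈ Finset.range n, (j : ZMod p)⁻¹ = ∑ j ∈ Finset.Ico 1 n, (j : ZMod p)⁻¹ := by
    cases n <;> simp [Finset.sum_range_eq_add_Ico]
  have hterm : ∀ j ∈ Finset.Ico 1 n,
      (((p - n : ℕ) : ZMod p) * (j : ZMod p) * ((n - j : ℕ) : ZMod p))⁻¹ =
        -(((n : ZMod p)⁻¹) ^ 2 * ((j : ZMod p)⁻¹ + ((n - j : ℕ) : ZMod p)⁻¹)) := by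
    intro j hj
    have hj' := Finset.mem_Ico.1 hj
    rw [ZMod.inv_mul_mul_of_add_eq (by omega) (by omega) (by omega) (by omega),
      show j + (n - j) = n by omega]
  rw [Finset.sum_congr rfl hterm, Finset.sum_neg_distrib, ← Finset.mul_sum,
    Finset.sum_add_distrib, Finset.sum_Ico_one_sub fun j => (j : ZMod p)⁻¹, hrange]
  ring
end

section
/- Let p be a prime and α, β, γ positive integers with p > α+β+γ and α+β+γ even. Then for every r ≥ 1, Z_{p^r}(α,β,γ) ≡ p^{2r-2} Z_p(α,β,γ) (mod p^{2r}), as a congruence of p-integral rational numbers. -/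
/-- `Z_N(α,β,γ) = ∑_{k1+k2+k3=N, p∤k1k2k3, ki>0} 1/(k1^α k2^β k3^γ)`. -/
def Z3 (p N α β γ : ℕ) : ℚ :=
  ∑ k ∈ (Finset.range (N + 1) ×ˢ Finset.range (N + 1) ×ˢ
      Finset.range (N + 1)).filter
      (fun k : ℕ × ℕ × ℕ => k.1 + k.2.1 + k.2.2 = N ∧
        0 < k.1 ∧ ¬ p ∣ k.1 ∧ 0 < k.2.1 ∧ ¬ p ∣ k.2.1 ∧ 0 < k.2.2 ∧ ¬ p ∣ k.2.2),
    1 / ((k.1 : ℚ) ^ α * (k.2.1 : ℚ) ^ β * (k.2.2 : ℚ) ^ γ)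

theorem sum_antidiagonal_choose_mul_choose (u v n : ℕ) :
    ∑ q ∈ Finset.HasAntidiagonal.antidiagonal n, q.1.choose u * q.2.choose v =
      (n + 1).choose (u + v + 1) := by
  induction n generalizing u with
  | zero => cases u <;> cases v <;> simp [Nat.choose]
  | succ n ih =>
    rw [Finset.Nat.sum_antidiagonal_succ]
    cases u with
    | zero =>
      have := ih 0
      simp only [Nat.choose_zero_right, one_mul, zero_add] at this ⊢
      rw [this, ← Nat.choose_succ_succ']
    | succ u =>
      simp only [Nat.choose_succ_succ' _ u, add_mul, Finset.sum_add_distrib, ih]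
      rw [show u + 1 + v + 1 = (u + v + 1) + 1 by ring, Nat.choose_succ_succ' (n + 1)]
      simp

/-- The triples of natural numbers with sum `n`. -/
def sumTriples (n : ℕ) : Finset (ℕ × ℕ × ℕ) :=
  (Finset.range (n + 1) ×ˢ Finset.range (n + 1) ×ˢ Finset.range (n + 1)).filter
    fun x => x.1 + x.2.1 + x.2.2 = n

theorem mem_sumTriples {n : ℕ} {x : ℕ × ℕ × ℕ} :
    x ∈ sumTriples n ↔ x.1 + x.2.1 + x.2.2 = n := by
  simp only [sumTriples, Finset.mem_filter, Finset.mem_product, Finset.mem_range]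
  omega

theorem sum_sumTriples {M : Type*} [AddCommMonoid M] (n : ℕ) (F : ℕ × ℕ × ℕ → M) :
    ∑ x ∈ sumTriples n, F x =
      ∑ q ∈ Finset.HasAntidiagonal.antidiagonal n,
        ∑ s ∈ Finset.HasAntidiagonal.antidiagonal q.2, F (q.1, s.1, s.2) := by
  rw [Finset.sum_sigma']
  refine Finset.sum_bij' (fun x _ => ⟨(x.1, x.2.1 + x.2.2), (x.2.1, x.2.2)⟩)
    (fun y _ => (y.1.1, y.2.1, y.2.2)) ?_ ?_ ?_ ?_ ?_
  · intro x hx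
    rw [mem_sumTriples] at hx
    simp only [Finset.mem_sigma, Finset.HasAntidiagonal.mem_antidiagonal, and_true]
    omega
  · rintro ⟨⟨a, b⟩, ⟨c, d⟩⟩ hy
    simp only [Finset.mem_sigma, Finset.HasAntidiagonal.mem_antidiagonal] at hy
    rw [mem_sumTriples]
    simp only
    omega
  · intro x hx
    rfl
  · rintro ⟨⟨a, b⟩, ⟨c, d⟩⟩ hy
    simp only [Finset.mem_sigma, Finset.HasAntidiagonal.mem_antidiagonal] at hy
    obtain ⟨_, rfl⟩ := hy
    rfl
  · intro x hx
    rfl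

theorem sum_sumTriples_choose (n u v w : ℕ) :
    ∑ x ∈ sumTriples n, x.1.choose u * (x.2.1.choose v * x.2.2.choose w) =
      (n + 2).choose (u + v + w + 2) := by
  rw [sum_sumTriples]
  simp only [← Finset.mul_sum, sum_antidiagonal_choose_mul_choose]
  have h := sum_antidiagonal_choose_mul_choose u (v + w + 1) (n + 1)
  rw [Finset.Nat.sum_antidiagonal_succ'] at h
  simp only [Nat.choose_zero_succ, mul_zero, zero_add] at h
  rw [h]
  congr 1
  ring

theorem sum_sumTriples_prod {R ι : Type*} [CommRing R] [Fintype ι] (n : ℕ) (l : ι → ℕ)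
    (d e f : ι → R) :
    ∑ x ∈ sumTriples n, (∑ u, d u * x.1.choose (l u)) * (∑ v, e v * x.2.1.choose (l v)) *
        (∑ w, f w * x.2.2.choose (l w)) =
      ∑ u, ∑ v, ∑ w, d u * e v * f w * ((n + 2).choose (l u + l v + l w + 2) : ℕ) := by
  have h (x : ℕ × ℕ × ℕ) : (∑ u, d u * (x.1.choose (l u) : R)) *
      (∑ v, e v * (x.2.1.choose (l v) : R)) * (∑ w, f w * (x.2.2.choose (l w) : R)) =
      ∑ u, ∑ v, ∑ w, d u * e v * f w *
        (x.1.choose (l u) * (x.2.1.choose (l v) * x.2.2.choose (l w)) : ℕ) := by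
    rw [Finset.sum_mul_sum, Finset.sum_mul]
    refine Finset.sum_congr rfl fun u _ => ?_
    rw [Finset.sum_mul_sum]
    refine Finset.sum_congr rfl fun v _ => Finset.sum_congr rfl fun w _ => ?_
    push_cast
    ring
  rw [Finset.sum_congr rfl fun x _ => h x]
  simp only [← sum_sumTriples_choose, Nat.cast_sum, Finset.mul_sum]
  rw [Finset.sum_comm]
  refine Finset.sum_congr rfl fun u _ => ?_
  rw [Finset.sum_comm]
  refine Finset.sum_congr rfl fun v _ => ?_
  rw [Finset.sum_comm]

theorem cast_sq_eq_choose {R : Type*} [CommRing R] (x : ℕ) :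
    (x : R) ^ 2 = 2 * x.choose 2 + x := by
  induction x with
  | zero => simp
  | succ x ih =>
    rw [Nat.choose_succ_succ' x 1, Nat.choose_one_right]
    push_cast
    linear_combination ih

theorem cast_cube_eq_choose {R : Type*} [CommRing R] (x : ℕ) :
    (x : R) ^ 3 = 6 * x.choose 3 + 6 * x.choose 2 + x := by
  induction x with
  | zero => simp
  | succ x ih =>
    rw [Nat.choose_succ_succ' x 2, Nat.choose_succ_succ' x 1, Nat.choose_one_right]
    push_cast
    linear_combination ih + 3 * cast_sq_eq_choose (R := R) x

theorem sum_trunc {R : Type*} [CommRing R] {N : R} (hN : N ^ 4 = 0) (d e f h : ℕ → R) :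
    ∑ u : Fin 4, ∑ v : Fin 4, ∑ w : Fin 4, (N ^ (u : ℕ) * d u) * (N ^ (v : ℕ) * e v) *
        (N ^ (w : ℕ) * f w) * h (u + v + w) =
      d 0 * e 0 * f 0 * h 0 +
      N * (d 1 * e 0 * f 0 + d 0 * e 1 * f 0 + d 0 * e 0 * f 1) * h 1 +
      N ^ 2 * (d 2 * e 0 * f 0 + d 0 * e 2 * f 0 + d 0 * e 0 * f 2 +
        d 1 * e 1 * f 0 + d 1 * e 0 * f 1 + d 0 * e 1 * f 1) * h 2 +
      N ^ 3 * (d 3 * e 0 * f 0 + d 0 * e 3 * f 0 + d 0 * e 0 * f 3 +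
        d 2 * e 1 * f 0 + d 2 * e 0 * f 1 + d 1 * e 2 * f 0 + d 0 * e 2 * f 1 +
        d 1 * e 0 * f 2 + d 0 * e 1 * f 2 + d 1 * e 1 * f 1) * h 3 := by
  have h5 : N ^ 5 = 0 := by rw [pow_succ, hN, zero_mul]
  have h6 : N ^ 6 = 0 := by rw [pow_succ, h5, zero_mul]
  have h7 : N ^ 7 = 0 := by rw [pow_succ, h6, zero_mul]
  have h8 : N ^ 8 = 0 := by rw [pow_succ, h7, zero_mul]
  have h9 : N ^ 9 = 0 := by rw [pow_succ, h8, zero_mul]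
  simp only [Fin.sum_univ_four, Fin.coe_ofNat_eq_mod, Nat.zero_mod, Nat.reduceMod, Nat.reduceAdd,
    pow_zero, one_mul, pow_one, zero_add, add_zero]
  ring_nf
  simp only [hN, h5, h6, h7, h8, h9, mul_zero, zero_mul, add_zero]

set_option maxRecDepth 100000 in
theorem sum_trunc_add {R : Type*} [CommRing R] {N p q : R} (hN : N ^ 4 = 0) (hN3 : N ^ 3 * q = 0)
    (hN2 : N ^ 2 * q * p = 0) (h : ℕ → R) (hq : p = 24 * q) (h1 : h 1 = p)
    (h2 : h 2 = 12 * q * (p - 1)) (h3 : h 3 = 4 * q * (p - 1) * (p - 2))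
    (h4 : h 4 = q * (p - 1) * (p - 2) * (p - 3))
    (a b c a' b' c' : ℕ → R)
    (ha0 : a' 0 = a 0 - N * a 1 + N ^ 2 * a 2 - N ^ 3 * a 3)
    (ha1 : a' 1 = -a 1 + 2 * N * a 2 - 3 * N ^ 2 * a 3)
    (ha2 : a' 2 = a 2 - 3 * N * a 3)
    (ha3 : a' 3 = -a 3)
    (hb0 : b' 0 = b 0 - N * b 1 + N ^ 2 * b 2 - N ^ 3 * b 3)
    (hb1 : b' 1 = -b 1 + 2 * N * b 2 - 3 * N ^ 2 * b 3)
    (hb2 : b' 2 = b 2 - 3 * N * b 3)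
    (hb3 : b' 3 = -b 3)
    (hc0 : c' 0 = c 0 - N * c 1 + N ^ 2 * c 2 - N ^ 3 * c 3)
    (hc1 : c' 1 = -c 1 + 2 * N * c 2 - 3 * N ^ 2 * c 3)
    (hc2 : c' 2 = c 2 - 3 * N * c 3)
    (hc3 : c' 3 = -c 3) :
    ∑ u : Fin 4, ∑ v : Fin 4, ∑ w : Fin 4, (N ^ (u : ℕ) * a u) * (N ^ (v : ℕ) * b v) *
        (N ^ (w : ℕ) * c w) * (h (u + v + w + 1) + h (u + v + w + 2)) +
    ∑ u : Fin 4, ∑ v : Fin 4, ∑ w : Fin 4, (N ^ (u : ℕ) * a' u) * (N ^ (v : ℕ) * b' v) *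
        (N ^ (w : ℕ) * c' w) * h (u + v + w + 2) = p ^ 2 * (a 0 * b 0 * c 0) := by
  have h5 : N ^ 5 = 0 := by rw [pow_succ, hN, zero_mul]
  have h6 : N ^ 6 = 0 := by rw [pow_succ, h5, zero_mul]
  have h7 : N ^ 7 = 0 := by rw [pow_succ, h6, zero_mul]
  have h8 : N ^ 8 = 0 := by rw [pow_succ, h7, zero_mul]
  have h9 : N ^ 9 = 0 := by rw [pow_succ, h8, zero_mul]
  rw [sum_trunc hN a b c (fun i => h (i + 1) + h (i + 2)),
    sum_trunc hN a' b' c' (fun i => h (i + 2))]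
  simp only [ha0, ha1, ha2, ha3, hb0, hb1, hb2, hb3, hc0, hc1, hc2, hc3, zero_add,
    Nat.reduceAdd, h1, h2, h3, h4]
  have hp2 : p ^ 2 = 24 * q * p := by rw [sq]; nth_rw 1 [hq]
  rw [hp2]
  have h10 : N ^ 2 * q * p ^ 3 = 0 := by linear_combination p ^ 2 * hN2
  rw [← sub_eq_zero, ← zero_add (_ - _), ← sub_self (N * q * p)]
  ring_nf
  simp only [hN, h5, h6, h7, h8, h9, hN3, hN2, h10, zero_mul, add_zero, sub_zero]
  linear_combination a 0 * b 0 * c 0 * hq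

theorem exists_cubic_eq_inv_pow {R : Type*} [CommRing R] {N a b : R} (hN : N ^ 4 = 0)
    (hab : a * b = 1) (α : ℕ) :
    ∃ c₀ c₁ c₂ c₃ : R, c₀ = b ^ α ∧ ∀ x z : R, (a + N * x) * z = 1 →
      z ^ α = c₀ + c₁ * (N * x) + c₂ * (N * x) ^ 2 + c₃ * (N * x) ^ 3 := by
  induction α with
  | zero => exact ⟨1, 0, 0, 0, by simp, fun x z _ => by simp⟩
  | succ α ih =>
    obtain ⟨c₀, c₁, c₂, c₃, hc, h⟩ := ih
    refine ⟨c₀ * b, c₁ * b - c₀ * b ^ 2, c₂ * b - c₁ * b ^ 2 + c₀ * b ^ 3,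
      c₃ * b - c₂ * b ^ 2 + c₁ * b ^ 3 - c₀ * b ^ 4, by rw [hc, pow_succ], fun x z hz => ?_⟩
    rw [pow_succ, h x z hz]
    have ht : (N * x) ^ 4 = 0 := by rw [mul_pow, hN, zero_mul]
    generalize N * x = t at *
    have hz' : z = b - b ^ 2 * t + b ^ 3 * t ^ 2 - b ^ 4 * t ^ 3 := by
      linear_combination (b - b ^ 2 * t + b ^ 3 * t ^ 2 - b ^ 4 * t ^ 3) * hz -
        z * (1 - b * t + b ^ 2 * t ^ 2 - b ^ 3 * t ^ 3) * hab + z * b ^ 4 * ht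
    rw [hz']
    linear_combination (-c₁ * b ^ 4 + c₂ * b ^ 3 - c₂ * b ^ 4 * t - c₃ * b ^ 2 + c₃ * b ^ 3 * t
      - c₃ * b ^ 4 * t ^ 2) * ht

theorem exists_choose_expansion_inv_pow {R : Type*} [CommRing R] {N a b : R} (hN : N ^ 4 = 0)
    (hab : a * b = 1) (α : ℕ) :
    ∃ d d' : ℕ → R, d 0 = b ^ α ∧ d' 0 = d 0 - N * d 1 + N ^ 2 * d 2 - N ^ 3 * d 3 ∧
      d' 1 = -d 1 + 2 * N * d 2 - 3 * N ^ 2 * d 3 ∧ d' 2 = d 2 - 3 * N * d 3 ∧ d' 3 = -d 3 ∧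
      (∀ (x : ℕ) (z : R), (a + N * x) * z = 1 →
        z ^ α = ∑ u : Fin 4, N ^ (u : ℕ) * d u * (x.choose u : R)) ∧
      ∀ (x : ℕ) (z : R), (N * (x + 1) - a) * z = 1 →
        (-1) ^ α * z ^ α = ∑ u : Fin 4, N ^ (u : ℕ) * d' u * (x.choose u : R) := by
  obtain ⟨c₀, c₁, c₂, c₃, hc, h⟩ := exists_cubic_eq_inv_pow hN hab α
  let d : ℕ → R
    | 0 => c₀
    | 1 => c₁ + N * c₂ + N ^ 2 * c₃
    | 2 => 2 * c₂ + 6 * N * c₃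
    | _ => 6 * c₃
  let d' : ℕ → R
    | 0 => d 0 - N * d 1 + N ^ 2 * d 2 - N ^ 3 * d 3
    | 1 => -d 1 + 2 * N * d 2 - 3 * N ^ 2 * d 3
    | 2 => d 2 - 3 * N * d 3
    | _ => -d 3
  refine ⟨d, d', hc, rfl, rfl, rfl, rfl, fun x z hz => ?_, fun x z hz => ?_⟩
  · rw [h x z hz]
    simp only [Fin.sum_univ_four, Fin.coe_ofNat_eq_mod, Nat.zero_mod, Nat.reduceMod, d,
      Nat.choose_zero_right, Nat.choose_one_right]
    push_cast
    linear_combination c₂ * N ^ 2 * cast_sq_eq_choose (R := R) x +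
      c₃ * N ^ 3 * cast_cube_eq_choose (R := R) x
  · rw [← mul_pow, h (-(x + 1)) _ (by linear_combination hz)]
    simp only [Fin.sum_univ_four, Fin.coe_ofNat_eq_mod, Nat.zero_mod, Nat.reduceMod, d, d',
      Nat.choose_zero_right, Nat.choose_one_right]
    push_cast
    linear_combination (c₂ * N ^ 2 - 3 * c₃ * N ^ 3) * cast_sq_eq_choose (R := R) x -
      c₃ * N ^ 3 * cast_cube_eq_choose (R := R) x

/-- The index set of `Z3 p N`: triples of positive integers prime to `p` with sum `N`. -/
def primeToTriples (p N : ℕ) : Finset (ℕ × ℕ × ℕ) :=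
  (Finset.range (N + 1) ×ˢ Finset.range (N + 1) ×ˢ Finset.range (N + 1)).filter
    fun k : ℕ × ℕ × ℕ => k.1 + k.2.1 + k.2.2 = N ∧
      0 < k.1 ∧ ¬ p ∣ k.1 ∧ 0 < k.2.1 ∧ ¬ p ∣ k.2.1 ∧ 0 < k.2.2 ∧ ¬ p ∣ k.2.2

theorem mem_primeToTriples {p N : ℕ} {k : ℕ × ℕ × ℕ} :
    k ∈ primeToTriples p N ↔
      k.1 + k.2.1 + k.2.2 = N ∧ ¬ p ∣ k.1 ∧ ¬ p ∣ k.2.1 ∧ ¬ p ∣ k.2.2 := by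
  have h (m : ℕ) : (0 < m ∧ ¬ p ∣ m) ↔ ¬ p ∣ m :=
    ⟨fun h => h.2, fun h => ⟨Nat.pos_of_ne_zero fun h0 => h (h0 ▸ dvd_zero p), h⟩⟩
  simp only [primeToTriples, Finset.mem_filter, Finset.mem_product, Finset.mem_range,
    ← and_assoc (a := 0 < _), h]
  constructor
  · rintro ⟨-, h1, h2, h3, h4⟩
    exact ⟨h1, h2, h3, h4⟩
  · rintro ⟨h1, h2, h3, h4⟩
    refine ⟨?_, h1, h2, h3, h4⟩
    omega

theorem sum_primeToTriples_mul {M : Type*} [AddCommMonoid M] {p N n : ℕ} (hN : 0 < N)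
    (hpN : p ∣ N) (F : ℕ × ℕ × ℕ → M) :
    ∑ k ∈ primeToTriples p ((n + 2) * N), F k = ∑ a ∈ primeToTriples p N,
      (∑ x ∈ sumTriples (n + 1), F (a.1 + N * x.1, a.2.1 + N * x.2.1, a.2.2 + N * x.2.2) +
        ∑ x ∈ sumTriples n, F (N * (x.1 + 1) - a.1, N * (x.2.1 + 1) - a.2.1,
          N * (x.2.2 + 1) - a.2.2)) := by
  have hmod (m : ℕ) (h : ¬ p ∣ m) : ¬ p ∣ m % N := by rwa [Nat.dvd_mod_iff hpN]
  have hadd (m x : ℕ) (h : ¬ p ∣ m) : ¬ p ∣ m + N * x := by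
    rwa [Nat.dvd_add_left (hpN.mul_right x)]
  have hsub (m x : ℕ) (hm : m ≤ N * (x + 1)) (h : ¬ p ∣ m) : ¬ p ∣ N * (x + 1) - m := by
    rwa [Nat.dvd_sub_iff_right hm (hpN.mul_right _)]
  have hpos (m : ℕ) (h : ¬ p ∣ m) : 0 < m := Nat.pos_of_ne_zero fun h0 => h (h0 ▸ dvd_zero p)
  have hback (m : ℕ) : N * (m / N + 1) - (N - m % N) = m := by
    have h1 := Nat.mod_add_div m N
    have h2 := Nat.mod_lt m hN
    rw [mul_add]
    omega
  have hsplit (a x : ℕ) (h : a < N) : N * (x + 1) - a = N - a + N * x := by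
    rw [mul_add]
    omega
  have hrem (a x : ℕ) (h0 : 0 < a) (h : a < N) : (N * (x + 1) - a) % N = N - a := by
    rw [hsplit a x h, Nat.add_mul_mod_self_left, Nat.mod_eq_of_lt (by omega)]
  have hquo (a x : ℕ) (h0 : 0 < a) (h : a < N) : (N * (x + 1) - a) / N = x := by
    rw [hsplit a x h, Nat.add_mul_div_left _ _ hN, Nat.div_eq_of_lt (by omega), zero_add]
  have hle (m x : ℕ) (hm : m ≤ N) : m ≤ N * (x + 1) :=
    hm.trans (Nat.le_mul_of_pos_right _ (by omega))
  rw [Finset.sum_add_distrib, ← Finset.sum_product', ← Finset.sum_product',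
    ← Finset.sum_filter_add_sum_filter_not _
      (fun k : ℕ × ℕ × ℕ => k.1 % N + k.2.1 % N + k.2.2 % N = N)]
  congr 1
  · refine Finset.sum_bij' (fun k _ => ((k.1 % N, k.2.1 % N, k.2.2 % N),
      (k.1 / N, k.2.1 / N, k.2.2 / N)))
      (fun y _ => (y.1.1 + N * y.2.1, y.1.2.1 + N * y.2.2.1, y.1.2.2 + N * y.2.2.2)) ?_ ?_ ?_ ?_ ?_
    · intro k hk
      simp only [Finset.mem_filter, mem_primeToTriples] at hk
      obtain ⟨⟨h1, h2, h3, h4⟩, h5⟩ := hk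
      simp only [Finset.mem_product, mem_primeToTriples, mem_sumTriples]
      refine ⟨⟨h5, hmod _ h2, hmod _ h3, hmod _ h4⟩, ?_⟩
      have e1 := Nat.mod_add_div k.1 N
      have e2 := Nat.mod_add_div k.2.1 N
      have e3 := Nat.mod_add_div k.2.2 N
      refine Nat.eq_of_mul_eq_mul_left hN ?_
      linarith
    · intro y hy
      simp only [Finset.mem_product, mem_primeToTriples, mem_sumTriples] at hy
      obtain ⟨⟨h1, h2, h3, h4⟩, h5⟩ := hy
      have l2 := hpos _ h2
      have l3 := hpos _ h3
      have l4 := hpos _ h4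
      simp only [Finset.mem_filter, mem_primeToTriples, Nat.add_mul_mod_self_left]
      refine ⟨⟨?_, hadd _ _ h2, hadd _ _ h3, hadd _ _ h4⟩, ?_⟩
      · linear_combination h1 + N * h5
      · rw [Nat.mod_eq_of_lt (by omega), Nat.mod_eq_of_lt (by omega), Nat.mod_eq_of_lt (by omega),
          h1]
    · intro k hk
      simp only [Nat.mod_add_div]
    · intro y hy
      simp only [Finset.mem_product, mem_primeToTriples, mem_sumTriples] at hy
      obtain ⟨⟨h1, h2, h3, h4⟩, h5⟩ := hy
      have l2 := hpos _ h2
      have l3 := hpos _ h3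
      have l4 := hpos _ h4
      have m2 : y.1.1 < N := by omega
      have m3 : y.1.2.1 < N := by omega
      have m4 : y.1.2.2 < N := by omega
      simp only [Nat.add_mul_mod_self_left, Nat.mod_eq_of_lt, m2, m3, m4,
        Nat.add_mul_div_left _ _ hN, Nat.div_eq_of_lt, zero_add]
    · intro k hk
      simp only [Nat.mod_add_div]
  · refine Finset.sum_bij' (fun k _ => ((N - k.1 % N, N - k.2.1 % N, N - k.2.2 % N),
      (k.1 / N, k.2.1 / N, k.2.2 / N)))
      (fun y _ => (N * (y.2.1 + 1) - y.1.1, N * (y.2.2.1 + 1) - y.1.2.1,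
        N * (y.2.2.2 + 1) - y.1.2.2)) ?_ ?_ ?_ ?_ ?_
    · intro k hk
      simp only [Finset.mem_filter, mem_primeToTriples] at hk
      obtain ⟨⟨h1, h2, h3, h4⟩, h5⟩ := hk
      have l2 := hpos _ (hmod _ h2)
      have l3 := hpos _ (hmod _ h3)
      have l4 := hpos _ (hmod _ h4)
      have m2 := Nat.mod_lt k.1 hN
      have m3 := Nat.mod_lt k.2.1 hN
      have m4 := Nat.mod_lt k.2.2 hN
      have e1 := Nat.mod_add_div k.1 N
      have e2 := Nat.mod_add_div k.2.1 N
      have e3 := Nat.mod_add_div k.2.2 N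
      have hs : k.1 % N + k.2.1 % N + k.2.2 % N + N * (k.1 / N + k.2.1 / N + k.2.2 / N) =
          N * (n + 2) := by linarith
      obtain ⟨m, hm⟩ : N ∣ k.1 % N + k.2.1 % N + k.2.2 % N :=
        (Nat.dvd_add_left (dvd_mul_right _ _)).1 (hs ▸ dvd_mul_right _ _)
      have hm3 : m < 3 := Nat.lt_of_mul_lt_mul_left (a := N) (by omega)
      have hm2 : m = 2 := by
        interval_cases m
        · omega
        · omega
        · rfl
      subst hm2
      have hr (m : ℕ) (h : ¬ p ∣ m) : ¬ p ∣ N - m % N := by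
        rw [Nat.dvd_sub_iff_right (Nat.mod_lt m hN).le hpN]
        exact hmod m h
      simp only [Finset.mem_product, mem_primeToTriples, mem_sumTriples]
      refine ⟨⟨by omega, hr _ h2, hr _ h3, hr _ h4⟩, ?_⟩
      refine Nat.eq_of_mul_eq_mul_left hN ?_
      linarith
    · intro y hy
      simp only [Finset.mem_product, mem_primeToTriples, mem_sumTriples] at hy
      obtain ⟨⟨h1, h2, h3, h4⟩, h5⟩ := hy
      have l2 := hpos _ h2
      have l3 := hpos _ h3
      have l4 := hpos _ h4
      simp only [Finset.mem_filter, mem_primeToTriples]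
      refine ⟨⟨?_, hsub _ _ (hle _ _ (by omega)) h2, hsub _ _ (hle _ _ (by omega)) h3,
        hsub _ _ (hle _ _ (by omega)) h4⟩, ?_⟩
      · have e1 := Nat.sub_add_cancel (hle y.1.1 y.2.1 (by omega))
        have e2 := Nat.sub_add_cancel (hle y.1.2.1 y.2.2.1 (by omega))
        have e3 := Nat.sub_add_cancel (hle y.1.2.2 y.2.2.2 (by omega))
        have e4 : N * y.2.1 + N * y.2.2.1 + N * y.2.2.2 = N * n := by rw [← h5]; ring
        linarith
      · rw [hrem _ _ l2 (by omega), hrem _ _ l3 (by omega), hrem _ _ l4 (by omega)]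
        omega
    · intro k hk
      simp only [hback]
    · intro y hy
      simp only [Finset.mem_product, mem_primeToTriples, mem_sumTriples] at hy
      obtain ⟨⟨h1, h2, h3, h4⟩, h5⟩ := hy
      have l2 := hpos _ h2
      have l3 := hpos _ h3
      have l4 := hpos _ h4
      simp only [hrem y.1.1 y.2.1 l2 (by omega), hrem y.1.2.1 y.2.2.1 l3 (by omega),
        hrem y.1.2.2 y.2.2.2 l4 (by omega), hquo y.1.1 y.2.1 l2 (by omega),
        hquo y.1.2.1 y.2.2.1 l3 (by omega), hquo y.1.2.2 y.2.2.2 l4 (by omega)]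
      rw [Nat.sub_sub_self (by omega), Nat.sub_sub_self (by omega), Nat.sub_sub_self (by omega)]
    · intro k hk
      simp only [hback]

theorem sum_primeToTriples_inv {R : Type*} [CommRing R] {p N : ℕ} (hp : p.Prime) (hp5 : 5 ≤ p)
    (hN : 0 < N) (hpN : p ∣ N) (hN4 : (N : R) ^ 4 = 0) (hN3 : (N : R) ^ 3 * p = 0)
    (hN2 : (N : R) ^ 2 * p ^ 2 = 0) (g : ℕ → R) (hg : ∀ k : ℕ, ¬ p ∣ k → (k : R) * g k = 1)
    {α β γ : ℕ} (heven : Even (α + β + γ)) :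
    ∑ k ∈ primeToTriples p (p * N), g k.1 ^ α * g k.2.1 ^ β * g k.2.2 ^ γ =
      (p : R) ^ 2 * ∑ k ∈ primeToTriples p N, g k.1 ^ α * g k.2.1 ^ β * g k.2.2 ^ γ := by
  obtain ⟨n, rfl⟩ : ∃ n, p = n + 2 := ⟨p - 2, by omega⟩
  rw [sum_primeToTriples_mul hN hpN, Finset.mul_sum]
  refine Finset.sum_congr rfl fun a ha => ?_
  rw [mem_primeToTriples] at ha
  obtain ⟨h1, h2, h3, h4⟩ := ha
  have h24 : ((24 : ℕ) : R) * g 24 = 1 := by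
    refine hg 24 fun h => ?_
    rw [show 24 = 2 ^ 3 * 3 by norm_num, hp.dvd_mul] at h
    rcases h with h | h
    · have := Nat.le_of_dvd (by norm_num) (hp.dvd_of_dvd_pow h)
      omega
    · have := Nat.le_of_dvd (by norm_num) h
      omega
  push_cast at h24
  obtain ⟨d, d', hd, hd0, hd1, hd2, hd3, hdp, hdm⟩ :=
    exists_choose_expansion_inv_pow hN4 (hg _ h2) α
  obtain ⟨e, e', he, he0, he1, he2, he3, hep, hem⟩ :=
    exists_choose_expansion_inv_pow hN4 (hg _ h3) β
  obtain ⟨f, f', hf, hf0, hf1, hf2, hf3, hfp, hfm⟩ :=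
    exists_choose_expansion_inv_pow hN4 (hg _ h4) γ
  have hpos (m x : ℕ) (h : ¬ n + 2 ∣ m) : ((m : R) + N * x) * g (m + N * x) = 1 := by
    have := hg (m + N * x) (by rwa [Nat.dvd_add_left (hpN.mul_right x)])
    push_cast at this
    exact this
  have hneg (m x : ℕ) (hm : m ≤ N) (h : ¬ n + 2 ∣ m) :
      ((N : R) * (x + 1) - m) * g (N * (x + 1) - m) = 1 := by
    have hle : m ≤ N * (x + 1) := hm.trans (Nat.le_mul_of_pos_right _ (by omega))
    have := hg (N * (x + 1) - m) (by rwa [Nat.dvd_sub_iff_right hle (hpN.mul_right _)])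
    push_cast [hle] at this
    exact this
  have hP (x : ℕ × ℕ × ℕ) : g (a.1 + N * x.1) ^ α * g (a.2.1 + N * x.2.1) ^ β *
      g (a.2.2 + N * x.2.2) ^ γ = (∑ u : Fin 4, N ^ (u : ℕ) * d u * (x.1.choose u : R)) *
        (∑ u : Fin 4, N ^ (u : ℕ) * e u * (x.2.1.choose u : R)) *
        (∑ u : Fin 4, N ^ (u : ℕ) * f u * (x.2.2.choose u : R)) := by
    rw [hdp _ _ (hpos _ _ h2), hep _ _ (hpos _ _ h3), hfp _ _ (hpos _ _ h4)]
  have hM (x : ℕ × ℕ × ℕ) : g (N * (x.1 + 1) - a.1) ^ α * g (N * (x.2.1 + 1) - a.2.1) ^ β *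
      g (N * (x.2.2 + 1) - a.2.2) ^ γ = (∑ u : Fin 4, N ^ (u : ℕ) * d' u * (x.1.choose u : R)) *
        (∑ u : Fin 4, N ^ (u : ℕ) * e' u * (x.2.1.choose u : R)) *
        (∑ u : Fin 4, N ^ (u : ℕ) * f' u * (x.2.2.choose u : R)) := by
    rw [← hdm _ _ (hneg _ x.1 (by omega) h2), ← hem _ _ (hneg _ x.2.1 (by omega) h3),
      ← hfm _ _ (hneg _ x.2.2 (by omega) h4)]
    have h := heven.neg_one_pow (α := R)
    rw [pow_add, pow_add] at h
    linear_combination (-(g (N * (x.1 + 1) - a.1) ^ α * g (N * (x.2.1 + 1) - a.2.1) ^ β *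
      g (N * (x.2.2 + 1) - a.2.2) ^ γ)) * h
  simp only [hP, hM]
  rw [sum_sumTriples_prod (n + 1) (fun u : Fin 4 => (u : ℕ)) (fun u => (N : R) ^ (u : ℕ) * d u)
      (fun u => (N : R) ^ (u : ℕ) * e u) (fun u => (N : R) ^ (u : ℕ) * f u),
    sum_sumTriples_prod n (fun u : Fin 4 => (u : ℕ)) (fun u => (N : R) ^ (u : ℕ) * d' u)
      (fun u => (N : R) ^ (u : ℕ) * e' u) (fun u => (N : R) ^ (u : ℕ) * f' u)]
  have hc (i : ℕ) : ((n + 1 + 2).choose (i + 2) : R) =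
      (n + 2).choose (i + 1) + (n + 2).choose (i + 2) := by
    rw [← Nat.cast_add, ← Nat.choose_succ_succ' (n + 2) (i + 1)]
  simp only [hc]
  have hsucc (i : ℕ) : ((n + 2).choose (i + 1) : R) * (i + 1) = (n + 2).choose i * (n + 2 - i) := by
    rcases le_or_gt i (n + 2) with h | h
    · have := congrArg (Nat.cast (R := R)) (Nat.choose_succ_right_eq (n + 2) i)
      push_cast [h] at this
      exact this
    · rw [Nat.choose_eq_zero_of_lt h, Nat.choose_eq_zero_of_lt (by omega)]
      simp
  have c1 := hsucc 1
  have c2 := hsucc 2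
  have c3 := hsucc 3
  rw [Nat.choose_one_right] at c1
  push_cast at c1 c2 c3 hN3 hN2 ⊢
  norm_num at c1 c2 c3
  have e2 : ((n + 2).choose 2 : R) = 12 * (g 24 * (n + 2)) * (n + 2 - 1) := by
    linear_combination 12 * g 24 * c1 - (n + 2).choose 2 * h24
  have e3 : ((n + 2).choose 3 : R) = 4 * (g 24 * (n + 2)) * (n + 2 - 1) * (n + 2 - 2) := by
    linear_combination 8 * g 24 * c2 - (n + 2).choose 3 * h24 + 8 * g 24 * n * e2 +
      4 * g 24 * n * (n + 2) * (n + 1) * h24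
  have e4 : ((n + 2).choose 4 : R) =
      (g 24 * (n + 2)) * (n + 2 - 1) * (n + 2 - 2) * (n + 2 - 3) := by
    linear_combination 6 * g 24 * c3 - (n + 2).choose 4 * h24 + 6 * g 24 * (n - 1) * e3 +
      g 24 * n * (n + 2) * (n + 1) * (n - 1) * h24
  rw [← hd, ← he, ← hf]
  exact sum_trunc_add (p := (n : R) + 2) (q := g 24 * (n + 2)) hN4
    (by linear_combination g 24 * hN3) (by linear_combination g 24 * hN2)
    (fun i => ((n + 2).choose i : R)) (by linear_combination -(n + 2 : R) * h24) (by simp) e2 e3 e4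
    d e f d' e' f' hd0 hd1 hd2 hd3 he0 he1 he2 he3 hf0 hf1 hf2 hf3

theorem padicNorm_Z3_pow_succ_sub_le {p : ℕ} [hp : Fact p.Prime] (hp5 : 5 ≤ p) {α β γ : ℕ}
    (heven : Even (α + β + γ)) {r : ℕ} (hr : 1 ≤ r) :
    padicNorm p (Z3 p (p ^ (r + 1)) α β γ - (p : ℚ) ^ 2 * Z3 p (p ^ r) α β γ) ≤
      (p : ℚ) ^ (-(2 * (r + 1) : ℕ) : ℤ) := by
  let z (N : ℕ) : ℤ_[p] := ∑ k ∈ primeToTriples p N,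
    (k.1 : ℤ_[p]).inv ^ α * (k.2.1 : ℤ_[p]).inv ^ β * (k.2.2 : ℤ_[p]).inv ^ γ
  have hinv (k : ℕ) (h : ¬ p ∣ k) : (k : ℤ_[p]) * (k : ℤ_[p]).inv = 1 :=
    PadicInt.mul_inv (PadicInt.norm_natCast_eq_one_iff.2
      ((Nat.Prime.coprime_iff_not_dvd hp.out).2 h))
  have hinv' (k : ℕ) (h : ¬ p ∣ k) : (((k : ℤ_[p]).inv : ℤ_[p]) : ℚ_[p]) = (k : ℚ_[p])⁻¹ := by
    have := congrArg ((↑) : ℤ_[p] → ℚ_[p]) (hinv k h)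
    push_cast at this
    exact eq_inv_of_mul_eq_one_right this
  have hz (N : ℕ) : (z N : ℚ_[p]) = (Z3 p N α β γ : ℚ) := by
    rw [Z3, PadicInt.coe_sum, Rat.cast_sum]
    refine Finset.sum_congr rfl fun k hk => ?_
    obtain ⟨-, h2, h3, h4⟩ := mem_primeToTriples.1 hk
    push_cast
    rw [hinv' _ h2, hinv' _ h3, hinv' _ h4]
    simp only [inv_pow, one_div, mul_inv]
  have hp0 : ((p : ℕ) : ZMod (p ^ (2 * (r + 1)))) ^ (2 * (r + 1)) = 0 := by
    rw [← Nat.cast_pow, ZMod.natCast_self]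
  have hpow (m : ℕ) (hm : 2 * (r + 1) ≤ m) : ((p : ℕ) : ZMod (p ^ (2 * (r + 1)))) ^ m = 0 :=
    pow_eq_zero_of_le hm hp0
  have key : PadicInt.toZModPow (2 * (r + 1)) (z (p ^ (r + 1)) - (p : ℤ_[p]) ^ 2 * z (p ^ r)) = 0 := by
    simp only [z, map_sub, map_mul, map_pow, map_sum, map_natCast]
    rw [sub_eq_zero, pow_succ']
    refine sum_primeToTriples_inv hp.out hp5 (pow_pos hp.out.pos r) (dvd_pow_self p (by omega))
      ?_ ?_ ?_ (fun k => PadicInt.toZModPow (2 * (r + 1)) (k : ℤ_[p]).inv) ?_ heven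
    · rw [Nat.cast_pow, ← pow_mul]
      exact hpow _ (by omega)
    · rw [Nat.cast_pow, ← pow_mul, ← pow_succ]
      exact hpow _ (by omega)
    · rw [Nat.cast_pow, ← pow_mul, ← pow_add]
      exact hpow _ (by omega)
    · intro k hk
      rw [← map_natCast (PadicInt.toZModPow (2 * (r + 1))), ← map_mul, hinv k hk, map_one]
  rw [← RingHom.mem_ker, PadicInt.ker_toZModPow, ← PadicInt.norm_le_pow_iff_mem_span_pow,
    PadicInt.norm_def] at key
  push_cast [hz] at key
  have h := Padic.eq_padicNorm (p := p)
    (Z3 p (p ^ (r + 1)) α β γ - (p : ℚ) ^ 2 * Z3 p (p ^ r) α β γ)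
  push_cast at h
  rw [h] at key
  refine (Rat.cast_le (K := ℝ)).1 ?_
  push_cast
  exact key

/-- If `p` is prime, `α+β+γ` is even with `p > α+β+γ`, then for every `r ≥ 1`,
`Z_{p^r}(α,β,γ) ≡ p^{2r-2} Z_p(α,β,γ) (mod p^{2r})` as `p`-integral rationals. -/
theorem stmt_9 (p : ℕ) (hp : p.Prime) (α β γ : ℕ)
    (hα : 0 < α) (hβ : 0 < β) (hγ : 0 < γ)
    (hw : p > α + β + γ) (heven : Even (α + β + γ)) (r : ℕ) (hr : 1 ≤ r) :
    padicNorm p (Z3 p (p ^ r) α β γ - (p : ℚ) ^ (2 * r - 2) * Z3 p p α β γ)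
      ≤ (p : ℚ) ^ (-(2 * r : ℤ)) := by
  have : Fact p.Prime := ⟨hp⟩
  have hp5 : 5 ≤ p := by
    obtain ⟨m, hm⟩ := heven
    omega
  have hp0 : (0 : ℚ) < p := by exact_mod_cast hp.pos
  induction r, hr using Nat.le_induction with
  | base =>
    simp only [pow_one, mul_one, Nat.sub_self, pow_zero, one_mul, sub_self, padicNorm.zero]
    positivity
  | succ r hr ih =>
    have e : Z3 p (p ^ (r + 1)) α β γ - (p : ℚ) ^ (2 * (r + 1) - 2) * Z3 p p α β γ =
        (Z3 p (p ^ (r + 1)) α β γ - (p : ℚ) ^ 2 * Z3 p (p ^ r) α β γ) +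
        (p : ℚ) ^ 2 * (Z3 p (p ^ r) α β γ - (p : ℚ) ^ (2 * r - 2) * Z3 p p α β γ) := by
      rw [show 2 * (r + 1) - 2 = 2 + (2 * r - 2) by omega, pow_add]
      ring
    rw [e]
    refine padicNorm.nonarchimedean.trans (max_le ?_ ?_)
    · exact_mod_cast padicNorm_Z3_pow_succ_sub_le hp5 heven hr
    · rw [padicNorm.mul, sq, padicNorm.mul, padicNorm.padicNorm_p_of_prime]
      calc ((p : ℚ)⁻¹ * (p : ℚ)⁻¹) * _ ≤ ((p : ℚ)⁻¹ * (p : ℚ)⁻¹) * (p : ℚ) ^ (-(2 * r : ℤ)) := by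
            gcongr
        _ = (p : ℚ) ^ (-(2 * ((r + 1 : ℕ) : ℤ))) := by
            rw [← zpow_neg_one, ← zpow_add₀ hp0.ne', ← zpow_add₀ hp0.ne']
            congr 1
            push_cast
            ring
end

section
/- Let p be a prime, r ≥ 1, and m, n positive even integers with m, n ≥ 2r and (p-1) ∤ (m+n). Then ∑_{0<k<l<p^r} k^m l^n ≡ -(p^r/2) B_{m+n} + p^{2r} ∑_{j=0}^{m} C(m+1, j) (m+n+1-j) B_j B_{m+n-j} / (2(m+1)) (mod p^{2r}), where the congruence is of p-integral rational numbers (each term p·B_j·B_{m+n-j} is p-integral since (p-1) ∤ (m+n)). -/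
open Finset
open scoped Polynomial

/-- The prefix power sum is additive along blocks of length `M`, modulo `M`. -/
lemma sum_range_pow_mul_add_zmod (M m v b : ℕ) :
    (∑ k ∈ range (M * v + b), (k : ZMod M) ^ m) =
      v * ∑ k ∈ range M, (k : ZMod M) ^ m + ∑ k ∈ range b, (k : ZMod M) ^ m := by
  rw [sum_range_add]
  simp only [Nat.cast_add, Nat.cast_mul, ZMod.natCast_self, zero_mul, zero_add]
  congr 1
  induction v with
  | zero => simp
  | succ v ih =>
    rw [Nat.mul_succ, sum_range_add, ih]
    simp only [Nat.cast_add, Nat.cast_mul, ZMod.natCast_self, zero_mul, zero_add, Nat.cast_one]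
    ring

/-- The sum `∑_{k < l < M * v} k ^ m * l ^ c` modulo `M`. -/
lemma double_sum_range_pow_mul_zmod (M m c v : ℕ) :
    (∑ l ∈ range (M * v), (l : ZMod M) ^ c * ∑ k ∈ range l, (k : ZMod M) ^ m) =
      v * (∑ l ∈ range M, (l : ZMod M) ^ c * ∑ k ∈ range l, (k : ZMod M) ^ m) +
      v.choose 2 * ((∑ k ∈ range M, (k : ZMod M) ^ c) * ∑ k ∈ range M, (k : ZMod M) ^ m) := by
  induction v with
  | zero => simp
  | succ v ih =>
    rw [Nat.mul_succ, sum_range_add, ih]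
    simp only [sum_range_pow_mul_add_zmod, mul_add, sum_add_distrib, Nat.cast_add, Nat.cast_mul,
      ZMod.natCast_self, zero_mul, zero_add, Nat.cast_one, Nat.choose_succ_succ' v 1,
      Nat.choose_one_right, ← sum_mul]
    ring

lemma pow_dvd_sum_range_pow (p m s : ℕ) : p ^ s ∣ ∑ k ∈ range (p ^ (s + 1)), k ^ m := by
  induction s with
  | zero => simp
  | succ s ih =>
    obtain ⟨y, hy⟩ := ih
    have h := sum_range_pow_mul_add_zmod (p ^ (s + 1)) m p 0
    rw [← ZMod.natCast_eq_zero_iff]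
    rw [add_zero, ← pow_succ] at h
    push_cast
    rw [h]
    have hy' := congrArg (Nat.cast : ℕ → ZMod (p ^ (s + 1))) hy
    push_cast at hy'
    rw [hy', sum_range_zero, add_zero, ← mul_assoc, ← pow_succ']
    have := ZMod.natCast_self (p ^ (s + 1))
    push_cast at this
    rw [this, zero_mul]

lemma pow_dvd_double_sum_range_pow {p : ℕ} (hp : p.Prime) (hp2 : p ≠ 2) (m c s : ℕ) :
    p ^ s ∣ ∑ l ∈ range (p ^ (s + 1)), l ^ c * ∑ k ∈ range l, k ^ m := by
  induction s with
  | zero => simp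
  | succ s ih =>
    obtain ⟨y, hy⟩ := ih
    obtain ⟨z, hz⟩ := pow_dvd_sum_range_pow p m s
    obtain ⟨q, hq⟩ := hp.dvd_choose_self two_ne_zero (lt_of_le_of_ne hp.two_le hp2.symm)
    have h := double_sum_range_pow_mul_zmod (p ^ (s + 1)) m c p
    rw [← ZMod.natCast_eq_zero_iff]
    rw [← pow_succ] at h
    push_cast
    rw [h]
    have hy' := congrArg (Nat.cast : ℕ → ZMod (p ^ (s + 1))) hy
    have hz' := congrArg (Nat.cast : ℕ → ZMod (p ^ (s + 1))) hz
    push_cast at hy' hz'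
    have := ZMod.natCast_self (p ^ (s + 1))
    push_cast at this
    rw [hy', hz', hq]
    push_cast
    linear_combination (y + q * (∑ k ∈ range (p ^ (s + 1)), (k : ZMod (p ^ (s + 1))) ^ c) * z :
      ZMod (p ^ (s + 1))) * this

/-- The subring of `p`-integral rational numbers. -/
def pIntegers (p : ℕ) [Fact p.Prime] : Subring ℚ where
  carrier := {x | padicNorm p x ≤ 1}
  mul_mem' {a b} ha hb := by
    simp only [Set.mem_ofPred_eq, padicNorm.mul] at *
    exact mul_le_one₀ ha (padicNorm.nonneg _) hb
  one_mem' := by simp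
  add_mem' {a b} ha hb := padicNorm.nonarchimedean.trans (max_le ha hb)
  zero_mem' := by simp
  neg_mem' {a} ha := by simpa using ha

section

variable {p : ℕ} [Fact p.Prime]

lemma mem_pIntegers {x : ℚ} : x ∈ pIntegers p ↔ padicNorm p x ≤ 1 := Iff.rfl

lemma inv_natCast_mem_pIntegers {k : ℕ} (hk : ¬ p ∣ k) : (k : ℚ)⁻¹ ∈ pIntegers p := by
  have h := (padicNorm.nat_eq_one_iff (p := p) k).2 hk
  have h' : padicNorm p (1 / (k : ℚ)) = 1 := by rw [padicNorm.div, h]; simp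
  rw [mem_pIntegers, ← one_div, h']

lemma half_mem_pIntegers (hp2 : p ≠ 2) : (2 : ℚ)⁻¹ ∈ pIntegers p := by
  refine mod_cast inv_natCast_mem_pIntegers (p := p) (k := 2) fun h => hp2 ?_
  exact (Nat.prime_dvd_prime_iff_eq Fact.out Nat.prime_two).1 h

lemma prime_mul_bernoulli_mem_pIntegers (hp2 : p ≠ 2) (k : ℕ) :
    (p : ℚ) * bernoulli k ∈ pIntegers p := by
  rcases Nat.even_or_odd' k with ⟨i, rfl | rfl⟩
  · obtain ⟨z, hz⟩ := Bernoulli.vonStaudt_clausen i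
    rw [eq_sub_iff_add_eq.2 hz.symm, mul_sub, mul_sum]
    refine sub_mem (mul_mem (natCast_mem _ _) (intCast_mem _ _)) (sum_mem fun q hq => ?_)
    by_cases h : q = p
    · subst h
      rw [mul_one_div_cancel (mod_cast (Fact.out : q.Prime).ne_zero)]
      exact one_mem _
    · rw [one_div]
      refine mul_mem (natCast_mem _ _) (inv_natCast_mem_pIntegers fun hd => h ?_)
      exact ((Nat.prime_dvd_prime_iff_eq Fact.out (mem_filter.1 hq).2.1).1 hd).symm
  · rcases Nat.eq_zero_or_pos i with rfl | hi
    · have : bernoulli (2 * 0 + 1) = -(2 : ℚ)⁻¹ := by norm_num [bernoulli_one]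
      rw [this]
      exact mul_mem (natCast_mem _ _) (neg_mem (half_mem_pIntegers hp2))
    · rw [bernoulli_eq_zero_of_odd ⟨i, rfl⟩ (by lia), mul_zero]
      exact zero_mem _

lemma prime_mul_bernoulli_mul_bernoulli_mem_pIntegers_of_odd (hp2 : p ≠ 2) {a b : ℕ}
    (h : Odd (a + b)) : (p : ℚ) * (bernoulli a * bernoulli b) ∈ pIntegers p := by
  wlog ha : Odd a generalizing a b
  · rw [mul_comm (bernoulli a)]
    exact this (add_comm a b ▸ h) (by grind)
  rcases eq_or_ne a 1 with rfl | h1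
  · rw [bernoulli_one, show (p : ℚ) * (-1 / 2 * bernoulli b) = -(2⁻¹ * (p * bernoulli b)) by ring]
    exact neg_mem (mul_mem (half_mem_pIntegers hp2) (prime_mul_bernoulli_mem_pIntegers hp2 b))
  · rw [bernoulli_eq_zero_of_odd ha (by grind), zero_mul, mul_zero]
    exact zero_mem _

lemma padicNorm_prime_pow (n : ℕ) : padicNorm p ((p : ℚ) ^ n) = (p : ℚ) ^ (-n : ℤ) := by
  rw [zpow_neg, zpow_natCast]
  induction n with
  | zero => simp
  | succ n ih =>
    rw [pow_succ, padicNorm.mul, ih, padicNorm.padicNorm_p (Fact.out : p.Prime).one_lt, mul_inv]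

lemma exists_pow_mul_mem_pIntegers (x : ℚ) : ∃ s : ℕ, (p : ℚ) ^ s * x ∈ pIntegers p := by
  have hp1 : 1 < p := (Fact.out : p.Prime).one_lt
  obtain ⟨s, hs⟩ := pow_unbounded_of_one_lt (padicNorm p x) (mod_cast hp1 : (1 : ℚ) < p)
  refine ⟨s, ?_⟩
  have : (0 : ℚ) < (p : ℚ) ^ s := by positivity
  rw [mem_pIntegers, padicNorm.mul, padicNorm_prime_pow, zpow_neg, zpow_natCast,
    inv_mul_le_one₀ this]
  exact hs.le

lemma prime_pow_div_factorial_mem_pIntegers (hp5 : 5 ≤ p) {t : ℕ} (ht : 3 ≤ t) :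
    (p : ℚ) ^ (t - 4) / (t.factorial : ℚ) ∈ pIntegers p := by
  have hp1 : 1 < p := (Fact.out : p.Prime).one_lt
  have h := sub_one_mul_padicValNat_factorial_lt_of_ne_zero p (n := t) (by lia)
  have hv : padicValNat p t.factorial ≤ t - 4 := by
    have := Nat.mul_le_mul_right (padicValNat p t.factorial) (show 4 ≤ p - 1 by lia)
    lia
  rw [mem_pIntegers, padicNorm.div, padicNorm_prime_pow,
    padicNorm.eq_zpow_of_nonzero (mod_cast t.factorial_ne_zero), padicValRat.of_nat,
    ← zpow_sub₀ (mod_cast (by lia : p ≠ 0))]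
  exact zpow_le_one_of_nonpos₀ (mod_cast hp1.le) (by lia)

end

/-- The linear functional `X ^ k ↦ B_k` on polynomials. -/
noncomputable def bernoulliFunctional : ℚ[X] →ₗ[ℚ] ℚ :=
  Polynomial.lsum fun k => bernoulli k • LinearMap.id

lemma bernoulliFunctional_monomial (k : ℕ) (c : ℚ) :
    bernoulliFunctional (Polynomial.monomial k c) = bernoulli k * c := by
  simp [bernoulliFunctional, Polynomial.lsum_apply]

/-- Faulhaber's formula for the values of an arbitrary polynomial. -/
lemma sum_range_eval_eq_sum_bernoulliFunctional (f : ℚ[X]) {T : ℕ} (hT : f.natDegree < T)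
    (N : ℕ) :
    ∑ l ∈ range N, f.eval (l : ℚ) = ∑ t ∈ range T,
      (N : ℚ) ^ (t + 1) / (t + 1) * bernoulliFunctional (Polynomial.hasseDeriv t f) := by
  have hmon : ∀ s < T, ∀ c : ℚ, ∑ l ∈ range N, (Polynomial.monomial s c).eval (l : ℚ) =
      ∑ t ∈ range T, (N : ℚ) ^ (t + 1) / (t + 1) *
        bernoulliFunctional (Polynomial.hasseDeriv t (Polynomial.monomial s c)) := by
    intro s hs c
    simp only [Polynomial.eval_monomial, ← mul_sum, Polynomial.hasseDeriv_monomial,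
      bernoulliFunctional_monomial]
    rw [sum_range_pow, mul_sum, ← sum_range_reflect,
      ← sum_subset (range_subset_range.2 (by lia : s + 1 ≤ T))]
    · refine sum_congr rfl fun t ht => ?_
      have hts : t ≤ s := by simpa [Nat.lt_succ_iff] using ht
      rw [show s + 1 - 1 - t = s - t by lia, show s + 1 - (s - t) = t + 1 by lia,
        ← Nat.choose_symm_of_eq_add (show s + 1 = t + 1 + (s - t) by lia)]
      have h : ((s : ℚ) + 1) * s.choose t = (s + 1).choose (t + 1) * (t + 1) :=
        mod_cast Nat.add_one_mul_choose_eq s t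
      have h1 : ((s : ℚ) + 1) ≠ 0 := by positivity
      have h2 : ((t : ℚ) + 1) ≠ 0 := by positivity
      field_simp
      linear_combination -c * bernoulli (s - t) * N ^ (t + 1) * h
    · intro t _ ht
      rw [Nat.choose_eq_zero_of_lt (by simpa [Nat.lt_succ_iff] using ht)]
      simp
  rw [f.as_sum_range' T hT]
  simp only [Polynomial.eval_finsetSum, map_sum, mul_sum]
  rw [sum_comm (s := range N), sum_comm (s := range T) (t := range T)]
  exact sum_congr rfl fun s hs => hmon s (mem_range.1 hs) _

/-- The polynomial whose value at a natural number `l` is `∑_{k < l} k ^ m`. -/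
noncomputable def powerSumPolynomial (m : ℕ) : ℚ[X] :=
  ∑ j ∈ range (m + 1), Polynomial.monomial (m + 1 - j)
    (bernoulli j * ((m + 1).choose j : ℚ) / (m + 1))

lemma eval_powerSumPolynomial (m l : ℕ) :
    (powerSumPolynomial m).eval (l : ℚ) = ∑ k ∈ range l, (k : ℚ) ^ m := by
  rw [powerSumPolynomial, sum_range_pow, Polynomial.eval_finsetSum]
  refine sum_congr rfl fun j _ => ?_
  rw [Polynomial.eval_monomial]
  ring

lemma natDegree_powerSumPolynomial_le (m : ℕ) : (powerSumPolynomial m).natDegree ≤ m + 1 :=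
  Polynomial.natDegree_sum_le_of_forall_le _ _ fun _ _ =>
    (Polynomial.natDegree_monomial_le _).trans (Nat.sub_le _ _)

/-- Faulhaber's formula for the double sum `∑_{k < l < N} k ^ m * l ^ c`. -/
lemma double_sum_range_pow_eq (m c N : ℕ) :
    ∑ l ∈ range N, (l : ℚ) ^ c * ∑ k ∈ range l, (k : ℚ) ^ m = ∑ t ∈ range (m + c + 2),
      (N : ℚ) ^ (t + 1) / (t + 1) * bernoulliFunctional
        (Polynomial.hasseDeriv t (Polynomial.monomial c 1 * powerSumPolynomial m)) := by
  rw [← sum_range_eval_eq_sum_bernoulliFunctional]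
  · simp [Polynomial.eval_mul, eval_powerSumPolynomial]
  · refine Nat.lt_succ_of_le (Polynomial.natDegree_mul_le.trans ?_)
    have := natDegree_powerSumPolynomial_le m
    have := Polynomial.natDegree_monomial_le (R := ℚ) (m := c) 1
    lia

lemma bernoulliFunctional_monomial_mul_hasseDeriv_powerSumPolynomial (e k m : ℕ) :
    bernoulliFunctional (Polynomial.monomial e 1 *
        Polynomial.hasseDeriv k (powerSumPolynomial m)) =
      ∑ j ∈ range (m + 1), bernoulli (e + (m + 1 - j - k)) *
        ((m + 1 - j).choose k * (bernoulli j * ((m + 1).choose j : ℚ) / (m + 1))) := by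
  simp only [powerSumPolynomial, map_sum, Polynomial.hasseDeriv_monomial, mul_sum,
    Polynomial.monomial_mul_monomial, bernoulliFunctional_monomial, one_mul]

lemma succ_mul_choose_mul_choose_div (m i j : ℕ) :
    ((i + 1 : ℕ) : ℚ) * ((m + 1 - j).choose (i + 1) * ((m + 1).choose j / (m + 1))) =
      (m.choose i * (m - i).choose j : ℕ) := by
  have h1 := Nat.choose_mul (n := m + 1) (k := j + (i + 1)) (s := j) (by lia)
  have h2 := Nat.choose_mul (n := m + 1) (k := j + (i + 1)) (s := i + 1) (by lia)
  have h3 := Nat.add_one_mul_choose_eq m i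
  rw [Nat.choose_symm_add, h2] at h1
  rw [show m + 1 - (i + 1) = m - i by lia, show j + (i + 1) - (i + 1) = j by lia,
    show j + (i + 1) - j = i + 1 by lia] at h1
  have h1' : ((m + 1).choose (i + 1) * (m - i).choose j : ℚ) =
    (m + 1).choose j * (m + 1 - j).choose (i + 1) := mod_cast h1
  have h3' : ((m : ℚ) + 1) * m.choose i = (m + 1).choose (i + 1) * (i + 1) := mod_cast h3
  have h0 : ((m : ℚ) + 1) ≠ 0 := by positivity
  push_cast
  field_simp
  linear_combination -((m - i).choose j : ℚ) * h3' - (i + 1) * h1'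

section

variable {p : ℕ} [Fact p.Prime]

lemma mul_natCast_mul_bernoulliFunctional_mem_pIntegers {q : ℚ} {e k m : ℕ} (hk : 1 ≤ k)
    (hq : ∀ j, j + k ≤ m + 1 →
      q * (bernoulli j * bernoulli (e + (m + 1 - j - k))) ∈ pIntegers p) :
    q * (k * bernoulliFunctional (Polynomial.monomial e 1 *
      Polynomial.hasseDeriv k (powerSumPolynomial m))) ∈ pIntegers p := by
  rw [bernoulliFunctional_monomial_mul_hasseDeriv_powerSumPolynomial, mul_sum, mul_sum]
  refine sum_mem fun j _ => ?_
  by_cases h : j + k ≤ m + 1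
  · obtain ⟨i, rfl⟩ := Nat.exists_eq_add_of_le' hk
    convert mul_mem (hq j h) (natCast_mem (pIntegers p) (m.choose i * (m - i).choose j)) using 1
    rw [← succ_mul_choose_mul_choose_div]
    ring
  · rw [Nat.choose_eq_zero_of_lt (by lia : m + 1 - j < k)]
    simp

lemma prime_mul_bernoulliFunctional_mem_pIntegers (hp2 : p ≠ 2) (m c : ℕ) :
    (p : ℚ) * bernoulliFunctional (Polynomial.monomial c 1 * powerSumPolynomial m) ∈
      pIntegers p := by
  set a : ℕ → ℚ := fun t => bernoulliFunctional
    (Polynomial.hasseDeriv t (Polynomial.monomial c 1 * powerSumPolynomial m)) with ha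
  choose s hs using fun t : ℕ => exists_pow_mul_mem_pIntegers (p := p) (a t / (t + 1))
  set S := ∑ t ∈ range (m + c + 2), s t
  obtain ⟨y, hy⟩ := pow_dvd_double_sum_range_pow (Fact.out : p.Prime) hp2 m c S
  have hF := double_sum_range_pow_eq m c (p ^ (S + 1))
  have hy' := congrArg (Nat.cast : ℕ → ℚ) hy
  push_cast at hy' hF
  rw [hy', sum_range_succ'] at hF
  have hp0 : (p : ℚ) ≠ 0 := mod_cast (Fact.out : p.Prime).ne_zero
  have key : (p : ℚ) * bernoulliFunctional (Polynomial.monomial c 1 * powerSumPolynomial m) =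
      y - ∑ t ∈ range (m + c + 1), (p : ℚ) * (p ^ (S + 1)) ^ (t + 1) * (a (t + 1) / (t + 2)) := by
    apply mul_left_cancel₀ (pow_ne_zero S hp0)
    rw [mul_sub, hF, mul_sum]
    simp only [Polynomial.hasseDeriv_zero', Nat.cast_zero, zero_add, div_one, pow_one]
    rw [add_sub_right_comm, ← sum_sub_distrib, sum_eq_zero, zero_add, pow_succ, mul_assoc]
    intro t _
    simp only [ha]
    push_cast
    ring
  rw [key]
  refine sub_mem (natCast_mem _ _) (sum_mem fun t ht => ?_)
  have hle : s (t + 1) ≤ S :=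
    single_le_sum (f := s) (fun _ _ => Nat.zero_le _) (by simp at ht ⊢; lia)
  obtain ⟨d, hd⟩ := Nat.exists_eq_add_of_le (show s (t + 1) ≤ (S + 1) * (t + 1) by nlinarith)
  rw [← pow_mul, hd, pow_add]
  convert mul_mem (mul_mem (natCast_mem (pIntegers p) p) (pow_mem (natCast_mem _ p) d))
    (hs (t + 1)) using 1
  push_cast
  ring

/-- Integrality of the coefficient of `N ^ (t + 1)` in `∑_{k < l < N} k ^ m * l ^ n`. -/
lemma prime_pow_mul_coeff_mem_pIntegers (hp5 : 5 ≤ p) {m n t : ℕ} (hmn : Even (m + n))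
    (ht : 2 ≤ t) :
    (p : ℚ) ^ (t - 1) / (t + 1) * bernoulliFunctional
      (Polynomial.hasseDeriv t (Polynomial.monomial n 1 * powerSumPolynomial m)) ∈
        pIntegers p := by
  have hp2 : p ≠ 2 := by lia
  rw [Polynomial.hasseDeriv_mul, map_sum, mul_sum]
  refine sum_mem fun ik hik => ?_
  obtain ⟨i, k⟩ := ik
  rw [HasAntidiagonal.mem_antidiagonal] at hik
  simp only [Polynomial.hasseDeriv_monomial]
  by_cases hin : n < i
  · rw [Nat.choose_eq_zero_of_lt hin]
    simp
  set w := bernoulliFunctional (Polynomial.monomial (n - i) 1 *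
    Polynomial.hasseDeriv k (powerSumPolynomial m)) with hw
  have hC : bernoulliFunctional (Polynomial.monomial (n - i) ((n.choose i : ℚ) * 1) *
      Polynomial.hasseDeriv k (powerSumPolynomial m)) = n.choose i * w := by
    rw [hw, ← smul_eq_mul (n.choose i : ℚ) (bernoulliFunctional _), ← map_smul, ← smul_mul_assoc,
      Polynomial.smul_monomial, smul_eq_mul]
  rw [hC]
  set d := t - 1 - (t - 3) with hd
  have hmain : (p : ℚ) ^ d * ((max k 1 : ℕ) * w) ∈ pIntegers p := by
    rcases Nat.eq_zero_or_pos k with rfl | hk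
    · obtain ⟨d', hd'⟩ := Nat.exists_eq_add_of_le' (show 1 ≤ d by lia)
      rw [hd', pow_succ, mul_assoc]
      refine mul_mem (pow_mem (natCast_mem _ p) d') ?_
      simpa [hw] using prime_mul_bernoulliFunctional_mem_pIntegers hp2 m (n - i)
    · rw [max_eq_left hk]
      refine mul_natCast_mul_bernoulliFunctional_mem_pIntegers hk fun j hj => ?_
      rcases eq_or_lt_of_le ht with rfl | ht3
      · rw [show d = 1 by lia, pow_one]
        refine prime_mul_bernoulli_mul_bernoulli_mem_pIntegers_of_odd hp2 ?_
        grind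
      · rw [show d = 2 by lia, pow_two, mul_mul_mul_comm]
        exact mul_mem (prime_mul_bernoulli_mem_pIntegers hp2 _)
          (prime_mul_bernoulli_mem_pIntegers hp2 _)
  obtain ⟨z, hz⟩ := Nat.dvd_factorial (show 0 < max k 1 by lia) (show max k 1 ≤ t by lia)
  have hfac := prime_pow_div_factorial_mem_pIntegers hp5 (show 3 ≤ t + 1 by lia)
  convert mul_mem (mul_mem hfac hmain) (natCast_mem (pIntegers p) (z * n.choose i)) using 1
  have hz0 : (z : ℚ) ≠ 0 := by
    rintro h
    rw [Nat.cast_eq_zero.1 h, mul_zero] at hz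
    exact t.factorial_ne_zero hz
  have hk0 : ((max k 1 : ℕ) : ℚ) ≠ 0 := mod_cast (by lia)
  rw [Nat.factorial_succ, hz, show t - 1 = t + 1 - 4 + d by lia, pow_add]
  have ht0 : (t : ℚ) + 1 ≠ 0 := by positivity
  push_cast at hk0 ⊢
  field_simp

end

lemma bernoulliFunctional_monomial_mul_powerSumPolynomial {m n : ℕ} (hmn : Even (m + n))
    (hm0 : 0 < m) (hn0 : 0 < n) :
    bernoulliFunctional (Polynomial.monomial n 1 * powerSumPolynomial m) =
      -(1 / 2) * bernoulli (m + n) := by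
  have h := bernoulliFunctional_monomial_mul_hasseDeriv_powerSumPolynomial n 0 m
  rw [Polynomial.hasseDeriv_zero'] at h
  rw [h, sum_eq_single_of_mem 1 (by simp; lia)]
  · have h0 : ((m : ℚ) + 1) ≠ 0 := by positivity
    rw [show n + (m + 1 - 1 - 0) = m + n by lia]
    simp only [Nat.choose_zero_right, Nat.cast_one, bernoulli_one, Nat.choose_one_right, one_mul]
    push_cast
    field_simp
  · intro j hj hj1
    simp only [mem_range] at hj
    rcases Nat.even_or_odd j with hj2 | hj2
    · rw [bernoulli_eq_zero_of_odd (n := n + (m + 1 - j - 0)) (by grind) (by lia), zero_mul]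
    · rw [bernoulli_eq_zero_of_odd hj2 (by grind)]
      simp

lemma bernoulliFunctional_hasseDeriv_one (m n : ℕ) :
    bernoulliFunctional
        (Polynomial.hasseDeriv 1 (Polynomial.monomial n 1 * powerSumPolynomial m)) =
      ∑ j ∈ range (m + 1), ((m + 1).choose j : ℚ) * ((m + n + 1 - j : ℕ) : ℚ) *
        bernoulli j * bernoulli (m + n - j) / (m + 1) := by
  simp only [powerSumPolynomial, map_sum, mul_sum, Polynomial.monomial_mul_monomial,
    Polynomial.hasseDeriv_monomial, bernoulliFunctional_monomial, one_mul, Nat.choose_one_right]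
  refine sum_congr rfl fun j hj => ?_
  simp only [mem_range] at hj
  rw [show n + (m + 1 - j) - 1 = m + n - j by lia, show n + (m + 1 - j) = m + n + 1 - j by lia]
  ring

lemma sum_filter_pos_lt_eq {m : ℕ} (hm0 : 0 < m) (n N : ℕ) :
    ∑ x ∈ (range N ×ˢ range N).filter (fun x : ℕ × ℕ => 0 < x.1 ∧ x.1 < x.2),
        (x.1 : ℚ) ^ m * (x.2 : ℚ) ^ n =
      ∑ l ∈ range N, (l : ℚ) ^ n * ∑ k ∈ range l, (k : ℚ) ^ m := by
  rw [sum_filter, sum_product_right]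
  refine sum_congr rfl fun l hl => ?_
  rw [mul_sum, ← sum_filter]
  refine sum_subset_zero_on_sdiff (fun k hk => ?_) (fun k hk => ?_) fun k _ => mul_comm _ _
  · simp only [mem_filter, mem_range] at hk ⊢
    exact hk.2.2
  · simp only [mem_sdiff, mem_filter, mem_range] at hk hl
    have : k = 0 := by grind
    simp [this, hm0.ne']


/-- Key power-sum congruence: for a prime `p`, `r ≥ 1`, and positive even
`m, n ≥ 2r` with `(p-1) ∤ (m+n)`,
`∑_{0<k<l<p^r} k^m l^n ≡ -(p^r/2) B_{m+n}
  + p^{2r} ∑_{j=0}^{m} C(m+1,j) (m+n+1-j) B_j B_{m+n-j}/(2(m+1)) (mod p^{2r})`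
as `p`-integral rationals. -/
theorem stmt_15 (p : ℕ) (hp : p.Prime) (r : ℕ) (hr : 1 ≤ r) (m n : ℕ)
    (hm : Even m) (hn : Even n) (hm0 : 0 < m) (hn0 : 0 < n)
    (hmr : 2 * r ≤ m) (hnr : 2 * r ≤ n) (hdvd : ¬ (p - 1) ∣ (m + n)) :
    padicNorm p
        ((∑ x ∈ (Finset.range (p ^ r) ×ˢ Finset.range (p ^ r)).filter
            (fun x : ℕ × ℕ => 0 < x.1 ∧ x.1 < x.2),
            (x.1 : ℚ) ^ m * (x.2 : ℚ) ^ n) -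
          (-((p : ℚ) ^ r / 2) * bernoulli (m + n) +
            (p : ℚ) ^ (2 * r) *
              ∑ j ∈ Finset.range (m + 1),
                ((m + 1).choose j : ℚ) * ((m + n + 1 - j : ℕ) : ℚ) *
                  bernoulli j * bernoulli (m + n - j) / (2 * (m + 1))))
      ≤ (p : ℚ) ^ (-(2 * r : ℤ)) := by
  have : Fact p.Prime := ⟨hp⟩
  have hmn : Even (m + n) := hm.add hn
  have hp5 : 5 ≤ p := by
    by_contra! h
    interval_cases p
    · exact absurd hp (by decide)
    · exact absurd hp (by decide)
    · exact hdvd (one_dvd _)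
    · exact hdvd hmn.two_dvd
    · exact absurd hp (by decide)
  rw [sum_filter_pos_lt_eq hm0, double_sum_range_pow_eq, sum_range_succ', sum_range_succ']
  simp only [zero_add, Polynomial.hasseDeriv_zero', bernoulliFunctional_hasseDeriv_one,
    bernoulliFunctional_monomial_mul_powerSumPolynomial hmn hm0 hn0]
  have hrem : ∃ x ∈ pIntegers p, (p : ℚ) ^ (2 * r) * x = ∑ t ∈ range (m + n),
      ((p ^ r : ℕ) : ℚ) ^ (t + 1 + 1 + 1) / ((t + 1 + 1 : ℕ) + 1) * bernoulliFunctional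
        (Polynomial.hasseDeriv (t + 1 + 1)
          (Polynomial.monomial n 1 * powerSumPolynomial m)) := by
    refine ⟨∑ t ∈ range (m + n), (p : ℚ) ^ ((r - 1) * (t + 1)) * ((p : ℚ) ^ (t + 2 - 1) /
      ((t + 2 : ℕ) + 1) * bernoulliFunctional (Polynomial.hasseDeriv (t + 2)
          (Polynomial.monomial n 1 * powerSumPolynomial m))), sum_mem fun t _ =>
        mul_mem (pow_mem (natCast_mem _ p) _)
          (prime_pow_mul_coeff_mem_pIntegers hp5 hmn (by lia)), ?_⟩
    rw [mul_sum]
    refine sum_congr rfl fun t _ => ?_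
    have : ((p ^ r : ℕ) : ℚ) ^ (t + 1 + 1 + 1) =
        (p : ℚ) ^ (2 * r) * (p : ℚ) ^ ((r - 1) * (t + 1)) * (p : ℚ) ^ (t + 2 - 1) := by
      obtain ⟨q, rfl⟩ := Nat.exists_eq_add_of_le' hr
      rw [← pow_add, ← pow_add, Nat.cast_pow, ← pow_mul]
      congr 1
      simp only [Nat.add_sub_cancel, show t + 2 - 1 = t + 1 by lia]
      ring
    rw [this]
    ring
  obtain ⟨x, hx, hxe⟩ := hrem
  rw [← hxe]
  have heq : ∑ j ∈ range (m + 1), ((m + 1).choose j : ℚ) * ((m + n + 1 - j : ℕ) : ℚ) *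
        bernoulli j * bernoulli (m + n - j) / (2 * (m + 1)) =
      (∑ j ∈ range (m + 1), ((m + 1).choose j : ℚ) * ((m + n + 1 - j : ℕ) : ℚ) *
        bernoulli j * bernoulli (m + n - j) / (m + 1)) / 2 := by
    rw [sum_div]
    exact sum_congr rfl fun j _ => by rw [div_div, mul_comm (2 : ℚ)]
  rw [heq]
  calc padicNorm p _ = padicNorm p ((p : ℚ) ^ (2 * r) * x) := by
        congr 1
        push_cast
        ring
    _ ≤ (p : ℚ) ^ (-(2 * r : ℤ)) := by
        rw [padicNorm.mul, padicNorm_prime_pow]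
        push_cast
        exact mul_le_of_le_one_right (by positivity) hx
end

section
/- Let p be a prime ≥ 5 and α, β, γ positive integers with w = α+β+γ odd and p > w. Then, modulo p, Z_p(α,β,γ) ≡ ( ∑_{j=1}^{max(α,β)} ((-1)^{α+β-j}/w) (C(α+β-j-1, α-1) + C(α+β-j-1, β-1)) C(w, j) + 2(-1)^γ C(α+β, α) δ_{p-1, w} ) · B_{p-w}, where δ is the Kronecker delta, B denotes Bernoulli numbers, and Z_p(α,β,γ) := ∑_{k1+k2+k3=p, p∤k1k2k3} 1/(k1^α k2^β k3^γ) is interpreted in ℤ/pℤ. -/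
/-- `q` is integral at `p` with residue `x` modulo `p`. -/
def HasResidue (p : ℕ) [Fact p.Prime] (q : ℚ) (x : ZMod p) : Prop :=
  (q.den : ZMod p) ≠ 0 ∧ (q : ZMod p) = x

namespace HasResidue

variable {p : ℕ} [Fact p.Prime] {q r : ℚ} {x y : ZMod p}

theorem add (hq : HasResidue p q x) (hr : HasResidue p r y) : HasResidue p (q + r) (x + y) := by
  refine ⟨fun h => ?_, ?_⟩
  · rw [ZMod.natCast_eq_zero_iff] at h
    have h' := (ZMod.natCast_eq_zero_iff _ _).2 (h.trans (Rat.add_den_dvd q r))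
    rw [Nat.cast_mul] at h'
    exact mul_ne_zero hq.1 hr.1 h'
  · rw [Rat.cast_add_of_ne_zero hq.1 hr.1, hq.2, hr.2]

theorem mul (hq : HasResidue p q x) (hr : HasResidue p r y) : HasResidue p (q * r) (x * y) := by
  refine ⟨fun h => ?_, ?_⟩
  · rw [ZMod.natCast_eq_zero_iff] at h
    have h' := (ZMod.natCast_eq_zero_iff _ _).2 (h.trans (Rat.mul_den_dvd q r))
    rw [Nat.cast_mul] at h'
    exact mul_ne_zero hq.1 hr.1 h'
  · rw [Rat.cast_mul_of_ne_zero hq.1 hr.1, hq.2, hr.2]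

theorem intCast (n : ℤ) : HasResidue p (n : ℚ) (n : ZMod p) :=
  ⟨by simp, by simp⟩

theorem natCast (n : ℕ) : HasResidue p (n : ℚ) (n : ZMod p) :=
  ⟨by simp, by simp⟩

theorem inv_natCast {n : ℕ} (hn : (n : ZMod p) ≠ 0) :
    HasResidue p (n : ℚ)⁻¹ (n : ZMod p)⁻¹ := by
  have hn0 : n ≠ 0 := by rintro rfl; simp at hn
  refine ⟨?_, ?_⟩
  · rwa [Rat.inv_natCast_den_of_pos (Nat.pos_of_ne_zero hn0)]
  · rw [Rat.cast_inv_of_ne_zero (by simpa using hn), Rat.cast_natCast]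

theorem div_natCast {n : ℕ} (hq : HasResidue p q x) (hn : (n : ZMod p) ≠ 0) :
    HasResidue p (q / n) (x / n) := by
  rw [div_eq_mul_inv, div_eq_mul_inv]
  exact hq.mul (inv_natCast hn)

theorem sum {ι : Type*} {s : Finset ι} {f : ι → ℚ} {g : ι → ZMod p}
    (h : ∀ i ∈ s, HasResidue p (f i) (g i)) : HasResidue p (∑ i ∈ s, f i) (∑ i ∈ s, g i) := by
  classical
  induction s using Finset.induction_on with
  | empty => simpa using natCast (p := p) 0
  | insert a s ha ih =>
    rw [Finset.sum_insert ha, Finset.sum_insert ha]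
    exact (h a (Finset.mem_insert_self a s)).add
      (ih fun i hi => h i (Finset.mem_insert_of_mem hi))

theorem pow (hq : HasResidue p q x) (n : ℕ) : HasResidue p (q ^ n) (x ^ n) := by
  induction n with
  | zero => simpa using natCast (p := p) 1
  | succ n ih => rw [pow_succ, pow_succ]; exact ih.mul hq

theorem ratCast (h : HasResidue p q x) : HasResidue p q (q : ZMod p) :=
  ⟨h.1, rfl⟩

end HasResidue

theorem natCast_ne_zero_of_lt {p n : ℕ} (h0 : 0 < n) (hn : n < p) : (n : ZMod p) ≠ 0 := fun h =>
  Nat.not_dvd_of_pos_of_lt h0 hn ((ZMod.natCast_eq_zero_iff n p).1 h)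

theorem hasResidue_bernoulli' {p : ℕ} [Fact p.Prime] {n : ℕ} (hn : n + 1 < p) :
    HasResidue p (bernoulli' n) (bernoulli' n : ZMod p) := by
  induction n using Nat.strong_induction_on with
  | _ n ih =>
    have key : HasResidue p (∑ k ∈ Finset.range n, (n.choose k : ℚ) / (n - k + 1) * bernoulli' k)
        (∑ k ∈ Finset.range n,
          (n.choose k : ZMod p) / ((n - k + 1 : ℕ) : ZMod p) * (bernoulli' k : ZMod p)) := by
      refine HasResidue.sum fun k hk => ?_
      have hk := Finset.mem_range.1 hk
      have e : (n - k + 1 : ℚ) = ((n - k + 1 : ℕ) : ℚ) := by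
        push_cast [Nat.cast_sub hk.le]; ring
      rw [e]
      exact ((HasResidue.natCast _).div_natCast
        (natCast_ne_zero_of_lt (by omega) (by omega))).mul (ih k hk (by omega))
    have h := ((HasResidue.natCast (p := p) 1).add ((HasResidue.intCast (-1)).mul key)).ratCast
    have e : bernoulli' n = ((1 : ℕ) : ℚ) + ((-1 : ℤ) : ℚ) *
        ∑ k ∈ Finset.range n, (n.choose k : ℚ) / (n - k + 1) * bernoulli' k := by
      rw [bernoulli'_def]; push_cast; ring
    rwa [← e] at h

theorem hasResidue_bernoulli {p : ℕ} [Fact p.Prime] {n : ℕ} (hn : n + 1 < p) :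
    HasResidue p (bernoulli n) (bernoulli n : ZMod p) := by
  have h := (((HasResidue.intCast (p := p) (-1)).pow n).mul (hasResidue_bernoulli' hn)).ratCast
  have e : bernoulli n = ((-1 : ℤ) : ℚ) ^ n * bernoulli' n := by simp [bernoulli]
  rwa [← e] at h

/-- Faulhaber's formula modulo `p`, for exponents below `p - 1`. -/
theorem ZMod.sum_range_pow_eq {p : ℕ} [Fact p.Prime] (n : ℕ) {m : ℕ} (hm : m + 1 < p) :
    ∑ k ∈ Finset.range n, (k : ZMod p) ^ m = ∑ i ∈ Finset.range (m + 1),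
      (bernoulli i : ZMod p) * ((m + 1).choose i : ZMod p) * (n : ZMod p) ^ (m + 1 - i) /
        ((m + 1 : ℕ) : ZMod p) := by
  have h1 : HasResidue p (∑ k ∈ Finset.range n, (k : ℚ) ^ m)
      (∑ k ∈ Finset.range n, (k : ZMod p) ^ m) :=
    HasResidue.sum fun k _ => (HasResidue.natCast k).pow m
  have h2 : HasResidue p (∑ k ∈ Finset.range n, (k : ℚ) ^ m) (∑ i ∈ Finset.range (m + 1),
      (bernoulli i : ZMod p) * ((m + 1).choose i : ZMod p) * (n : ZMod p) ^ (m + 1 - i) /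
        ((m + 1 : ℕ) : ZMod p)) := by
    rw [sum_range_pow]
    refine HasResidue.sum fun i hi => ?_
    have hi := Finset.mem_range.1 hi
    have := (((hasResidue_bernoulli (p := p) (n := i) (by omega)).mul
      (HasResidue.natCast ((m + 1).choose i))).mul
        ((HasResidue.natCast n).pow (m + 1 - i))).div_natCast
          (natCast_ne_zero_of_lt (n := m + 1) (by omega) hm)
    simpa using this
  exact h1.2.symm.trans h2.2

theorem ZMod.sum_range_natCast {p : ℕ} [NeZero p] {M : Type*} [AddCommMonoid M] (f : ZMod p → M) :
    ∑ n ∈ Finset.range p, f (n : ZMod p) = ∑ x : ZMod p, f x := by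
  refine Finset.sum_nbij' (fun n => (n : ZMod p)) ZMod.val ?_ ?_ ?_ ?_ ?_
  · simp
  · intro x _; exact Finset.mem_range.2 (ZMod.val_lt x)
  · intro n hn; exact ZMod.val_cast_of_lt (Finset.mem_range.1 hn)
  · intro x _; exact ZMod.natCast_zmod_val x
  · simp

theorem ZMod.sum_pow_mul_inv_pow {p : ℕ} [Fact p.Prime] {a b : ℕ} (ha : 0 < a) (hb : 0 < b)
    (hap : a < p - 1 + b) (hbp : b < p - 1 + a) :
    ∑ n ∈ Finset.range p, (n : ZMod p) ^ a * ((n : ZMod p) ^ b)⁻¹ =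
      if a = b then -1 else 0 := by
  rw [ZMod.sum_range_natCast (fun x : ZMod p => x ^ a * (x ^ b)⁻¹)]
  have hcard : Fintype.card (ZMod p) = p := ZMod.card p
  rcases lt_trichotomy a b with h | h | h
  · rw [if_neg h.ne]
    obtain ⟨c, rfl⟩ := Nat.exists_eq_add_of_lt h
    rw [← FiniteField.sum_pow_lt_card_sub_one (K := ZMod p) (c + 1) (by rw [hcard]; omega)]
    refine Fintype.sum_equiv (Equiv.inv (ZMod p)) _ _ fun x => ?_
    rcases eq_or_ne x 0 with rfl | hx
    · simp [ha.ne']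
    · simp only [Equiv.inv_apply, inv_pow]
      field_simp
      ring
  · subst h
    rw [if_pos rfl]
    have h0 := FiniteField.sum_pow_lt_card_sub_one (K := ZMod p) 0
      (by rw [hcard]; have := (Fact.out : p.Prime).two_le; omega)
    rw [← Finset.add_sum_erase _ _ (Finset.mem_univ (0 : ZMod p))] at h0 ⊢
    have e : ∑ x ∈ Finset.univ.erase (0 : ZMod p), x ^ a * (x ^ a)⁻¹ =
        ∑ x ∈ Finset.univ.erase (0 : ZMod p), x ^ 0 := by
      refine Finset.sum_congr rfl fun x hx => ?_
      rw [mul_inv_cancel₀ (pow_ne_zero _ (Finset.ne_of_mem_erase hx)), pow_zero]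
    rw [e, zero_pow ha.ne', zero_mul]
    linear_combination h0
  · rw [if_neg h.ne']
    obtain ⟨c, rfl⟩ := Nat.exists_eq_add_of_lt h
    rw [← FiniteField.sum_pow_lt_card_sub_one (K := ZMod p) (c + 1) (by rw [hcard]; omega)]
    refine Finset.sum_congr rfl fun x _ => ?_
    rcases eq_or_ne x 0 with rfl | hx
    · simp [hb.ne']
    · field_simp
      ring

theorem ZMod.natCast_choose_sub {p j l : ℕ} [Fact p.Prime] (hj : 0 < j) (h : j + l ≤ p) :
    ((j + l : ℕ) : ZMod p) * ((p - j).choose l : ZMod p) =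
      (-1) ^ l * j * ((j + l).choose j : ZMod p) := by
  induction l with
  | zero => simp
  | succ l ih =>
    have ih := ih (by omega)
    apply mul_left_cancel₀ (natCast_ne_zero_of_lt (p := p) (n := l + 1) (by omega) (by omega))
    have h1 : ((p - j).choose (l + 1) : ZMod p) * ((l + 1 : ℕ) : ZMod p) =
        ((p - j).choose l : ZMod p) * (-((j + l : ℕ) : ZMod p)) := by
      have := congrArg (Nat.cast (R := ZMod p)) (Nat.choose_succ_right_eq (p - j) l)
      rw [Nat.sub_sub, Nat.cast_mul, Nat.cast_mul, Nat.cast_sub (by omega : j + l ≤ p)] at this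
      simpa using this
    have h2 : ((j + (l + 1)).choose j : ZMod p) * ((l + 1 : ℕ) : ZMod p) =
        ((j + l).choose j : ZMod p) * ((j + (l + 1) : ℕ) : ZMod p) := by
      have := Nat.choose_mul_succ_eq (j + l) j
      rw [show j + l + 1 - j = l + 1 by omega] at this
      rw [← Nat.cast_mul, ← Nat.cast_mul, ← add_assoc, ← this]
    linear_combination ((j + (l + 1) : ℕ) : ZMod p) * h1 - ((j + (l + 1) : ℕ) : ZMod p) * ih -
      (-1) ^ (l + 1) * (j : ZMod p) * h2

/-- The double harmonic sum `∑_{0 < a < n < p} a⁻ʲ n⁻ˡ` modulo `p`. -/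
def doubleHarmonic (p j l : ℕ) : ZMod p :=
  ∑ n ∈ Finset.range p, ∑ a ∈ Finset.Ico 1 n, ((a : ZMod p) ^ j)⁻¹ * ((n : ZMod p) ^ l)⁻¹

theorem doubleHarmonic_eq {p j l : ℕ} [Fact p.Prime] (hj : 0 < j) (hl : 0 < l) (h : j + l < p) :
    doubleHarmonic p j l = (-1) ^ l * ((j + l).choose j : ZMod p) / ((j + l : ℕ) : ZMod p) *
      (bernoulli (p - (j + l)) : ZMod p) := by
  have inner : ∀ n ∈ Finset.range p,
      ∑ a ∈ Finset.Ico 1 n, ((a : ZMod p) ^ j)⁻¹ * ((n : ZMod p) ^ l)⁻¹ =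
      ∑ i ∈ Finset.range (p - j), (bernoulli i : ZMod p) * ((p - j).choose i : ZMod p) /
        ((p - j : ℕ) : ZMod p) * ((n : ZMod p) ^ (p - j - i) * ((n : ZMod p) ^ l)⁻¹) := by
    intro n hn
    have hn := Finset.mem_range.1 hn
    have e : ∑ a ∈ Finset.Ico 1 n, ((a : ZMod p) ^ j)⁻¹ =
        ∑ a ∈ Finset.range n, (a : ZMod p) ^ (p - j - 1) := by
      rw [Finset.range_eq_Ico]
      refine Finset.sum_subset_zero_on_sdiff (Finset.Ico_subset_Ico_left zero_le_one) ?_ ?_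
      · intro a ha
        have : a = 0 := by simp at ha; omega
        subst this
        rw [Nat.cast_zero, zero_pow (by omega)]
      · intro a ha
        have ha := Finset.mem_Ico.1 ha
        have ha0 := natCast_ne_zero_of_lt (p := p) (n := a) (by omega) (by omega)
        refine inv_eq_of_mul_eq_one_left ?_
        rw [← pow_add, show p - j - 1 + j = p - 1 by omega, ZMod.pow_card_sub_one_eq_one ha0]
    rw [← Finset.sum_mul, e, ZMod.sum_range_pow_eq n (by omega),
      show p - j - 1 + 1 = p - j by omega, Finset.sum_mul]
    exact Finset.sum_congr rfl fun i _ => by ring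
  rw [doubleHarmonic, Finset.sum_congr rfl inner, Finset.sum_comm]
  have outer : ∀ i ∈ Finset.range (p - j),
      ∑ n ∈ Finset.range p, (bernoulli i : ZMod p) * ((p - j).choose i : ZMod p) /
        ((p - j : ℕ) : ZMod p) * ((n : ZMod p) ^ (p - j - i) * ((n : ZMod p) ^ l)⁻¹) =
      if i = p - (j + l) then -((bernoulli i : ZMod p) * ((p - j).choose i : ZMod p) /
        ((p - j : ℕ) : ZMod p)) else 0 := by
    intro i hi
    have hi := Finset.mem_range.1 hi
    rw [← Finset.mul_sum, ZMod.sum_pow_mul_inv_pow (by omega) hl (by omega) (by omega)]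
    by_cases hil : i = p - (j + l)
    · rw [if_pos hil, if_pos (by omega)]; ring
    · rw [if_neg hil, if_neg (by omega), mul_zero]
  rw [Finset.sum_congr rfl outer, Finset.sum_ite_eq' (Finset.range (p - j)),
    if_pos (Finset.mem_range.2 (by omega))]
  have hc := ZMod.natCast_choose_sub (p := p) hj h.le
  have hs : (p - j).choose (p - (j + l)) = (p - j).choose l := by
    rw [← Nat.choose_symm (by omega : l ≤ p - j), show p - j - l = p - (j + l) by omega]
  have hj0 := natCast_ne_zero_of_lt (p := p) hj (by omega)
  have hw0 := natCast_ne_zero_of_lt (p := p) (n := j + l) (by omega) h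
  rw [hs, Nat.cast_sub (by omega : j ≤ p), CharP.cast_eq_zero (ZMod p) p, zero_sub]
  field_simp
  linear_combination (bernoulli (p - (j + l)) : ZMod p) * hc

/-- One half of the partial fraction expansion of `X ^ (a + 1) * Y ^ (b + 1)` when
`X * Y = (X + Y) * Z`. -/
def partialFraction {R : Type*} [CommRing R] (X Z : R) (a b : ℕ) : R :=
  ∑ i ∈ Finset.range (a + 1), ((b + i).choose b : R) * (X ^ (a + 1 - i) * Z ^ (b + 1 + i))

section partialFraction

variable {R : Type*} [CommRing R] (X Y Z : R) (a b : ℕ)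

theorem partialFraction_zero_left : partialFraction X Z 0 b = X * Z ^ (b + 1) := by
  simp [partialFraction]

theorem partialFraction_succ_zero :
    partialFraction X Z (a + 1) 0 = Z * (X ^ (a + 2) + partialFraction X Z a 0) := by
  rw [partialFraction, Finset.sum_range_succ', partialFraction, mul_add, Finset.mul_sum, add_comm]
  congr 1
  · simp; ring
  · refine Finset.sum_congr rfl fun i _ => ?_
    rw [show a + 1 + 1 - (i + 1) = a + 1 - i by omega]
    simp
    ring

theorem partialFraction_succ_succ :
    partialFraction X Z (a + 1) (b + 1) =
      Z * (partialFraction X Z (a + 1) b + partialFraction X Z a (b + 1)) := by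
  have h : Z * partialFraction X Z a (b + 1) = ∑ i ∈ Finset.range (a + 2),
      ((b + i).choose (b + 1) : R) * (X ^ (a + 2 - i) * Z ^ (b + 2 + i)) := by
    rw [Finset.sum_range_succ', partialFraction, Finset.mul_sum]
    simp only [add_zero, Nat.choose_succ_self, Nat.cast_zero, zero_mul]
    refine Finset.sum_congr rfl fun i _ => ?_
    rw [show a + 2 - (i + 1) = a + 1 - i by omega, show b + (i + 1) = b + 1 + i by omega]
    ring
  rw [mul_add, h, partialFraction, partialFraction, Finset.mul_sum, ← Finset.sum_add_distrib]
  refine Finset.sum_congr rfl fun i _ => ?_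
  rw [show b + 1 + i = (b + i) + 1 by omega, Nat.choose_succ_succ]
  push_cast
  ring

variable {X Y Z}

theorem pow_mul_pow_zero_eq_partialFraction (h : X * Y = (X + Y) * Z) :
    X ^ (a + 1) * Y = partialFraction X Z a 0 + partialFraction Y Z 0 a := by
  induction a with
  | zero => simp [partialFraction_zero_left]; linear_combination h
  | succ a ih =>
    rw [partialFraction_zero_left] at *
    rw [partialFraction_succ_zero]
    linear_combination X ^ (a + 1) * h + Z * ih

theorem pow_mul_pow_eq_partialFraction (h : X * Y = (X + Y) * Z) :
    X ^ (a + 1) * Y ^ (b + 1) = partialFraction X Z a b + partialFraction Y Z b a := by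
  induction b generalizing a with
  | zero => simpa using pow_mul_pow_zero_eq_partialFraction a h
  | succ b ihb =>
    induction a with
    | zero =>
      have h' : Y * X = (Y + X) * Z := by linear_combination h
      have := pow_mul_pow_zero_eq_partialFraction (b + 1) h'
      linear_combination this
    | succ a iha =>
      rw [partialFraction_succ_succ, partialFraction_succ_succ]
      linear_combination X ^ (a + 1) * Y ^ (b + 1) * h + Z * ihb (a + 1) + Z * iha

end partialFraction

theorem sum_choose_eq_sum_Icc {R : Type*} [CommRing R] (f : ℕ → R) (a b N : ℕ)
    (haN : a + 1 ≤ N) (hN : N ≤ a + b + 1) :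
    ∑ i ∈ Finset.range (a + 1), ((b + i).choose b : R) * f (a + 1 - i) =
      ∑ j ∈ Finset.Icc 1 N, ((a + 1 + (b + 1) - j - 1).choose b : R) * f j := by
  rw [← Finset.sum_subset (Finset.Icc_subset_Icc_right haN)]
  · refine Finset.sum_nbij' (fun i => a + 1 - i) (fun j => a + 1 - j) ?_ ?_ ?_ ?_ ?_
    · intro i hi; simp at hi ⊢; omega
    · intro j hj; simp at hj ⊢; omega
    · intro i hi; simp at hi ⊢; omega
    · intro j hj; simp at hj ⊢; omega
    · intro i hi
      have hi := Finset.mem_range.1 hi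
      rw [show a + 1 + (b + 1) - (a + 1 - i) - 1 = b + i by omega]
  · intro j hj hj'
    simp only [Finset.mem_Icc] at hj hj'
    rw [Nat.choose_eq_zero_of_lt (by omega), Nat.cast_zero, zero_mul]

theorem sum_partialFraction {p : ℕ} [Fact p.Prime] (a b c : ℕ) :
    ∑ n ∈ Finset.range p, ∑ k ∈ Finset.Ico 1 n,
      partialFraction (k : ZMod p)⁻¹ (n : ZMod p)⁻¹ a b * (n : ZMod p)⁻¹ ^ c =
    ∑ i ∈ Finset.range (a + 1), ((b + i).choose b : ZMod p) *
      doubleHarmonic p (a + 1 - i) (b + 1 + i + c) := by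
  simp only [partialFraction, doubleHarmonic, Finset.mul_sum, Finset.sum_mul]
  rw [Finset.sum_comm (s := Finset.range (a + 1))]
  refine Finset.sum_congr rfl fun n _ => ?_
  rw [Finset.sum_comm]
  refine Finset.sum_congr rfl fun i _ => Finset.sum_congr rfl fun k _ => ?_
  rw [inv_pow, inv_pow, inv_pow, pow_add _ (b + 1 + i) c, mul_inv]
  ring

/-- The sum over `k₁ + k₂ + k₃ = p` as a sum over `n = k₁ + k₂` and `k = k₁`. -/
theorem sum_filter_add_add_eq {p : ℕ} {M : Type*} [AddCommMonoid M] (f : ℕ × ℕ × ℕ → M) :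
    ∑ k ∈ (Finset.range (p + 1) ×ˢ Finset.range (p + 1) ×ˢ Finset.range (p + 1)).filter
        (fun k : ℕ × ℕ × ℕ => k.1 + k.2.1 + k.2.2 = p ∧
          0 < k.1 ∧ ¬ p ∣ k.1 ∧ 0 < k.2.1 ∧ ¬ p ∣ k.2.1 ∧ 0 < k.2.2 ∧ ¬ p ∣ k.2.2), f k =
      ∑ n ∈ Finset.range p, ∑ k ∈ Finset.Ico 1 n, f (k, n - k, p - n) := by
  rw [Finset.sum_sigma']
  refine Finset.sum_nbij' (fun k => ⟨k.1 + k.2.1, k.1⟩) (fun x => (x.2, x.1 - x.2, p - x.1))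
    ?_ ?_ ?_ ?_ ?_
  · rintro ⟨x, y, z⟩ h
    simp at h ⊢
    omega
  · rintro ⟨n, k⟩ h
    simp only [Finset.mem_sigma, Finset.mem_range, Finset.mem_Ico] at h
    simp only [Finset.mem_filter, Finset.mem_product, Finset.mem_range]
    exact ⟨by omega, by omega, by omega, Nat.not_dvd_of_pos_of_lt (by omega) (by omega), by omega,
      Nat.not_dvd_of_pos_of_lt (by omega) (by omega), by omega,
      Nat.not_dvd_of_pos_of_lt (by omega) (by omega)⟩
  · rintro ⟨x, y, z⟩ h
    simp at h ⊢
    omega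
  · rintro ⟨n, k⟩ h
    simp at h ⊢
    omega
  · rintro ⟨x, y, z⟩ h
    simp at h ⊢
    congr
    omega

theorem sum_inv_pow_mul_eq {p : ℕ} [Fact p.Prime] (a b c : ℕ) :
    ∑ n ∈ Finset.range p, ∑ k ∈ Finset.Ico 1 n,
      ((k : ZMod p) ^ (a + 1) * ((n - k : ℕ) : ZMod p) ^ (b + 1) * ((p - n : ℕ) : ZMod p) ^ c)⁻¹ =
    (-1) ^ c * ((∑ i ∈ Finset.range (a + 1), ((b + i).choose b : ZMod p) *
        doubleHarmonic p (a + 1 - i) (b + 1 + i + c)) +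
      ∑ i ∈ Finset.range (b + 1), ((a + i).choose a : ZMod p) *
        doubleHarmonic p (b + 1 - i) (a + 1 + i + c)) := by
  rw [← sum_partialFraction, ← sum_partialFraction, ← Finset.sum_add_distrib, Finset.mul_sum]
  refine Finset.sum_congr rfl fun n hn => ?_
  have hn := Finset.mem_range.1 hn
  have hr : ∑ k ∈ Finset.Ico 1 n,
      partialFraction (k : ZMod p)⁻¹ (n : ZMod p)⁻¹ b a * (n : ZMod p)⁻¹ ^ c =
      ∑ k ∈ Finset.Ico 1 n,
      partialFraction ((n - k : ℕ) : ZMod p)⁻¹ (n : ZMod p)⁻¹ b a * (n : ZMod p)⁻¹ ^ c := by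
    rw [Finset.sum_Ico_reflect
      (fun k => partialFraction (k : ZMod p)⁻¹ (n : ZMod p)⁻¹ b a * (n : ZMod p)⁻¹ ^ c) 1
        (Nat.le_succ n)]
    simp
  rw [hr, ← Finset.sum_add_distrib, Finset.mul_sum]
  refine Finset.sum_congr rfl fun k hk => ?_
  have hk := Finset.mem_Ico.1 hk
  have hk0 := natCast_ne_zero_of_lt (p := p) (n := k) (by omega) (by omega)
  have hnk0 := natCast_ne_zero_of_lt (p := p) (n := n - k) (by omega) (by omega)
  have hn0 := natCast_ne_zero_of_lt (p := p) (n := n) (by omega) (by omega)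
  have hsum : (n : ZMod p) = k + (n - k : ℕ) := by
    rw [← Nat.cast_add]; congr 1; omega
  have h : (k : ZMod p)⁻¹ * ((n - k : ℕ) : ZMod p)⁻¹ =
      ((k : ZMod p)⁻¹ + ((n - k : ℕ) : ZMod p)⁻¹) * (n : ZMod p)⁻¹ := by
    field_simp
    linear_combination hsum
  have hneg : ((p - n : ℕ) : ZMod p) = -(n : ZMod p) := by
    rw [Nat.cast_sub hn.le]; simp
  rw [← add_mul, ← pow_mul_pow_eq_partialFraction a b h, hneg, mul_inv, mul_inv, neg_pow, mul_inv,
    ← inv_pow, ← inv_pow, ← inv_pow, ← inv_pow, inv_neg, inv_one]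
  ring

/-- Yang–Cai: for a prime `p ≥ 5` and `α, β, γ ≥ 1` with `w = α+β+γ` odd and
`p > w`, in `ℤ/pℤ`:
`Z_p(α,β,γ) ≡ (∑_{j=1}^{max(α,β)} ((-1)^{α+β-j}/w)(C(α+β-j-1,α-1)+C(α+β-j-1,β-1)) C(w,j)
  + 2(-1)^γ C(α+β,α) δ_{p-1,w}) B_{p-w}`. -/
theorem stmt_16 (p : ℕ) [Fact p.Prime] (hp5 : 5 ≤ p) (α β γ : ℕ)
    (hα : 0 < α) (hβ : 0 < β) (hγ : 0 < γ)
    (hodd : Odd (α + β + γ)) (hw : p > α + β + γ) :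
    (∑ k ∈ (Finset.range (p + 1) ×ˢ Finset.range (p + 1) ×ˢ
        Finset.range (p + 1)).filter
        (fun k : ℕ × ℕ × ℕ => k.1 + k.2.1 + k.2.2 = p ∧
          0 < k.1 ∧ ¬ p ∣ k.1 ∧ 0 < k.2.1 ∧ ¬ p ∣ k.2.1 ∧ 0 < k.2.2 ∧ ¬ p ∣ k.2.2),
        ((k.1 : ZMod p) ^ α * (k.2.1 : ZMod p) ^ β * (k.2.2 : ZMod p) ^ γ)⁻¹)
      = ((((∑ j ∈ Finset.Icc 1 (max α β),
            (-1 : ℚ) ^ (α + β - j) / (α + β + γ) *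
              (((α + β - j - 1).choose (α - 1) : ℚ) +
                ((α + β - j - 1).choose (β - 1) : ℚ)) *
              ((α + β + γ).choose j : ℚ)) +
          2 * (-1 : ℚ) ^ γ * ((α + β).choose α : ℚ) *
            (if p - 1 = α + β + γ then 1 else 0)) *
          bernoulli (p - (α + β + γ)) : ℚ) : ZMod p) := by
  have hp2 : p ≠ 2 := by omega
  have hpo := (Fact.out : p.Prime).odd_of_ne_two hp2
  have hδ : p - 1 ≠ α + β + γ := by
    rw [Nat.odd_iff] at hodd hpo
    omega
  obtain ⟨a, rfl⟩ := Nat.exists_eq_add_of_lt hα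
  obtain ⟨b, rfl⟩ := Nat.exists_eq_add_of_lt hβ
  simp only [zero_add] at *
  rw [sum_filter_add_add_eq
    (fun k => ((k.1 : ZMod p) ^ (a + 1) * (k.2.1 : ZMod p) ^ (b + 1) * (k.2.2 : ZMod p) ^ γ)⁻¹),
    sum_inv_pow_mul_eq, if_neg hδ, mul_zero, add_zero]
  set N := max (a + 1) (b + 1) with hN
  set w := a + 1 + (b + 1) + γ with hw_def
  have hw0 := natCast_ne_zero_of_lt (p := p) (n := w) (by omega) hw
  have hl : ∑ i ∈ Finset.range (a + 1), ((b + i).choose b : ZMod p) *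
      doubleHarmonic p (a + 1 - i) (b + 1 + i + γ) = _ :=
    (Finset.sum_congr rfl fun i hi => by
      have := Finset.mem_range.1 hi
      rw [show b + 1 + i + γ = w - (a + 1 - i) by omega]).trans
    (sum_choose_eq_sum_Icc (fun j => doubleHarmonic p j (w - j)) a b N (by omega) (by omega))
  have hr : ∑ i ∈ Finset.range (b + 1), ((a + i).choose a : ZMod p) *
      doubleHarmonic p (b + 1 - i) (a + 1 + i + γ) = _ :=
    (Finset.sum_congr rfl fun i hi => by
      have := Finset.mem_range.1 hi
      rw [show a + 1 + i + γ = w - (b + 1 - i) by omega]).trans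
    (sum_choose_eq_sum_Icc (fun j => doubleHarmonic p j (w - j)) b a N (by omega) (by omega))
  rw [hl, hr, ← Finset.sum_add_distrib, Finset.mul_sum]
  have key := (HasResidue.sum (p := p) (s := Finset.Icc 1 N) fun j _ =>
    ((((HasResidue.intCast (-1)).pow (a + 1 + (b + 1) - j)).div_natCast hw0).mul
      ((HasResidue.natCast ((a + 1 + (b + 1) - j - 1).choose a)).add
        (HasResidue.natCast ((a + 1 + (b + 1) - j - 1).choose b)))).mul
      (HasResidue.natCast (w.choose j))).mul
    (hasResidue_bernoulli (p := p) (n := p - w) (by omega))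
  have hcast : (a + 1 : ℕ) + (b + 1 : ℕ) + (γ : ℚ) = (w : ℚ) := by
    rw [hw_def]; push_cast; ring
  rw [hcast]
  simp only [Nat.add_sub_cancel]
  simp only [Int.cast_neg, Int.cast_one] at key
  rw [key.2, Finset.sum_mul]
  refine Finset.sum_congr rfl fun j hj => ?_
  have hj := Finset.mem_Icc.1 hj
  rw [doubleHarmonic_eq (by omega) (by omega) (by omega), show j + (w - j) = w by omega,
    show w - j = a + 1 + (b + 1) - j + γ by omega, pow_add, add_comm (b + 1) (a + 1)]
  have hsq : (-1 : ZMod p) ^ γ * (-1) ^ γ = 1 := by rw [← mul_pow]; simp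
  linear_combination ((-1) ^ (a + 1 + (b + 1) - j) / (w : ZMod p) *
    (((a + 1 + (b + 1) - j - 1).choose a : ZMod p) + ((a + 1 + (b + 1) - j - 1).choose b : ZMod p)) *
    (w.choose j : ZMod p) * (bernoulli (p - w) : ZMod p)) * hsq
end
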